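/- arXiv:1103.0247 — 3 statements merged into one kernel-verified Lean document; each statement's English description precedes it below -/
import Mathlib

section
/- Let Γ be an infinite set. Then the Baire σ-algebra Ba(C_p(2^Γ)) coincides with the norm-Borel σ-algebra Bo(C(2^Γ)) if and only if the cardinal |Γ| is a Kunen cardinal. -/
/-- The σ-algebra on `Γ × Γ` generated by all rectangles `A ×ˢ B` with `A, B ⊆ Γ`
(the product σ-algebra of two copies of the power-set σ-algebra). -/
def productSigma (Γ : Type*) : MeasurableSpace (Γ × Γ) :=
  MeasurableSpace.generateFrom {S : Set (Γ × Γ) | ∃ A B : Set Γ, S = A ×ˢ B}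

/-- `|Γ|` is a Kunen cardinal: the product σ-algebra on `Γ × Γ` is the full power set. -/
def IsKunen (Γ : Type*) : Prop := productSigma Γ = ⊤

/-- The Baire σ-algebra of the pointwise convergence topology on `C(K, ℝ)`:
the σ-algebra generated by the evaluation maps `f ↦ f t`, `t ∈ K`. -/
def BaCp (K : Type*) [TopologicalSpace K] : MeasurableSpace C(K, ℝ) :=
  ⨆ t : K, MeasurableSpace.comap (fun f : C(K, ℝ) => f t) Real.measurableSpace

/-!
Suppose `Γ` is Kunen. The σ-algebra of countably many rectangles contains the diagonal, giving an
injection of `Γ` into `2 ^ ℕ`; hence `X ^ Γ` is separable for separable `X`, and a closed condition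
imposed on `f` at all points amounts to countably many Baire conditions. Cutting `Γ` along initial
segments of the codes yields countably many coordinate selectors `f ↦ e f`, each measurable into
the discrete space `Γ`, that together exhaust the coordinates on which `f` depends. Finite tuples
of selectors remain measurable into the discrete space, because `Γ` is Kunen. Hence `f` is a uniform
limit of functions `x ↦ g (x ∘ v f)` with `g` from a countable dense set and `v f` a tuple of
selectors. As these approximants are discretely measurable in `f`, every open set is Baire.

Conversely, if `u : X → ℝ` takes the values `0` and `1`, the functions `x ↦ u (x α) + 2 * u (x β)`
are at mutual distance at least `1`, so every set of them is closed. As their values at each point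
are measurable in `(α, β)` for the rectangle σ-algebra, pulling back shows that every subset of
`Γ × Γ` belongs to that σ-algebra.
-/

open Set TopologicalSpace MeasureTheory

section Kunen

variable {Γ Ω : Type*}

theorem measurable_fst_productSigma : Measurable[productSigma Γ, ⊤] (Prod.fst : Γ × Γ → Γ) :=
  fun A _ => MeasurableSpace.measurableSet_generateFrom ⟨A, univ, prod_univ.symm⟩

theorem measurable_snd_productSigma : Measurable[productSigma Γ, ⊤] (Prod.snd : Γ × Γ → Γ) :=
  fun B _ => MeasurableSpace.measurableSet_generateFrom ⟨univ, B, univ_prod.symm⟩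

theorem IsKunen.measurable_prodMk (hΓ : IsKunen Γ) {Y : Type*} {φ : Y → Γ}
    (hφ : Function.Injective φ) [MeasurableSpace Ω] {a : Ω → Γ} {b : Ω → Y}
    (ha : Measurable[_, ⊤] a) (hb : Measurable[_, ⊤] b) :
    Measurable[_, ⊤] fun ω => (a ω, b ω) := by
  have hpair : Measurable[_, productSigma Γ] fun ω => (a ω, φ (b ω)) := by
    refine measurable_generateFrom ?_
    rintro _ ⟨A, B, rfl⟩
    exact (ha (t := A) trivial).inter (hb (t := φ ⁻¹' B) trivial)
  rw [show productSigma Γ = ⊤ from hΓ] at hpair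
  intro S _
  rw [← preimage_image_eq S (Function.injective_id.prodMap hφ)]
  exact hpair (t := Prod.map id φ '' S) trivial

theorem IsKunen.measurable_finTuple [Infinite Γ] (hΓ : IsKunen Γ) [MeasurableSpace Ω] {n : ℕ}
    {e : Fin n → Ω → Γ} (he : ∀ i, Measurable[_, ⊤] (e i)) :
    Measurable[_, ⊤] fun ω i => e i ω := by
  induction n with
  | zero =>
    let _ : MeasurableSpace (Fin 0 → Γ) := ⊤
    exact measurable_of_subsingleton_codomain _
  | succ n ih =>
    obtain ⟨listEquiv⟩ : Nonempty (List Γ ≃ Γ) := Cardinal.eq.1 (Cardinal.mk_list_eq_mk Γ)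
    have htail := ih fun i => he i.succ
    have hpair := hΓ.measurable_prodMk (listEquiv.injective.comp List.ofFn_injective) (he 0) htail
    have hcons : (fun ω i => e i ω) = fun ω => Fin.cons (e 0 ω) fun i => e i.succ ω :=
      funext fun ω => (Fin.cons_self_tail fun i => e i ω).symm
    rw [hcons]
    exact fun S _ => hpair (t := {p | (Fin.cons p.1 p.2 : Fin (n + 1) → Γ) ∈ S}) trivial

theorem exists_code_of_measurableSet_productSigma {S : Set (Γ × Γ)}
    (hS : MeasurableSet[productSigma Γ] S) :
    ∃ c : Γ → ℕ → Prop, ∀ γ γ', c γ = c γ' → ∀ y, (γ, y) ∈ S ↔ (γ', y) ∈ S := by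
  induction S, hS using MeasurableSpace.generateFrom_induction with
  | hC _ hrect =>
    obtain ⟨A, B, rfl⟩ := hrect
    refine ⟨fun γ _ => γ ∈ A, fun γ γ' h y => ?_⟩
    have hA : (γ ∈ A) = (γ' ∈ A) := congrFun h 0
    simp only [mem_prod, hA]
  | empty => exact ⟨fun _ _ => True, fun _ _ _ _ => Iff.rfl⟩
  | compl _ _ ih =>
    obtain ⟨c, hc⟩ := ih
    exact ⟨c, fun γ γ' h y => not_congr (hc γ γ' h y)⟩
  | iUnion _ _ ih =>
    choose c hc using ih
    refine ⟨fun γ n => c n.unpair.1 γ n.unpair.2, fun γ γ' h y => ?_⟩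
    simp only [mem_iUnion]
    refine exists_congr fun i => hc i γ γ' (funext fun n => ?_) y
    simpa only [Nat.unpair_pair] using congrFun h (Nat.pair i n)

theorem IsKunen.exists_injective_code (hΓ : IsKunen Γ) :
    ∃ c : Γ → ℕ → Prop, Function.Injective c := by
  obtain ⟨c, hc⟩ := exists_code_of_measurableSet_productSigma (Γ := Γ) (S := diagonal Γ)
    (by rw [show productSigma Γ = ⊤ from hΓ]; trivial)
  exact ⟨c, fun γ γ' h => ((hc γ γ' h γ).1 rfl).symm⟩

end Kunen

section SeparatesFinsets

variable {Γ κ X : Type*}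

/-- The sequence `q` of partitions of `Γ`, with the pieces labelled by `κ`, eventually separates
the points of each finite set. -/
def SeparatesFinsets (q : ℕ → Γ → κ) : Prop :=
  ∀ F : Finset Γ, ∃ n, InjOn (q n) F

theorem separatesFinsets_res {c : Γ → ℕ → κ} (hc : Function.Injective c) :
    SeparatesFinsets fun n γ => PiNat.res (c γ) n := by
  classical
  intro F
  refine ⟨(F ×ˢ F).sup (fun p => PiNat.firstDiff (c p.1) (c p.2)) + 1,
    fun γ hγ γ' hγ' hres => ?_⟩
  by_contra hne
  refine PiNat.apply_firstDiff_ne (hc.ne hne) (PiNat.res_eq_res.1 hres (Nat.lt_succ_of_le ?_))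
  exact Finset.le_sup (f := fun p : Γ × Γ => PiNat.firstDiff (c p.1) (c p.2))
    (b := (γ, γ')) (Finset.mk_mem_product hγ hγ')

theorem mem_closure_pi_of_forall_finset [TopologicalSpace X] {S : Set (Γ → X)} {x : Γ → X}
    (h : ∀ F : Finset Γ, ∃ y ∈ S, EqOn y x F) : x ∈ closure S := by
  rw [mem_closure_iff_nhds]
  intro U hU
  rw [nhds_pi, Filter.mem_pi] at hU
  obtain ⟨I, hI, t, ht, hsub⟩ := hU
  obtain ⟨y, hyS, hyx⟩ := h hI.toFinset
  refine ⟨y, hsub fun γ hγ => ?_, hyS⟩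
  rw [hyx (hI.mem_toFinset.2 hγ)]
  exact mem_of_mem_nhds (ht γ)

theorem SeparatesFinsets.separableSpace_pi [Countable κ] {q : ℕ → Γ → κ} (hq : SeparatesFinsets q)
    [Nonempty Γ] (X : Type*) [TopologicalSpace X] [SeparableSpace X] : SeparableSpace (Γ → X) := by
  let D : Set (Γ → X) := ⋃ n, range fun z : κ → X => z ∘ q n
  have hsep : IsSeparable D := .iUnion fun n => isSeparable_range (by fun_prop)
  rw [← isSeparable_univ_iff]
  refine hsep.closure.mono fun x _ => mem_closure_pi_of_forall_finset fun F => ?_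
  obtain ⟨n, hn⟩ := hq F
  refine ⟨(x ∘ Function.invFunOn (q n) F) ∘ q n, mem_iUnion.2 ⟨n, mem_range_self _⟩,
    fun γ hγ => ?_⟩
  exact congrArg x (hn.leftInvOn_invFunOn hγ)

end SeparatesFinsets

section OscAlong

variable {Γ X E : Type*} [PseudoMetricSpace E] {f : (Γ → X) → E} {A B : Set Γ} {r s : ℝ}

/-- Changing the coordinates in `A` of a point changes the value of `f` by at most `r`, i.e. the
oscillation of `f` along the coordinates in `A` is at most `r`. -/
def OscAlongLE (f : (Γ → X) → E) (A : Set Γ) (r : ℝ) : Prop :=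
  ∀ x y, EqOn x y Aᶜ → dist (f x) (f y) ≤ r

namespace OscAlongLE

theorem mono (h : OscAlongLE f B s) (hAB : A ⊆ B) (hsr : s ≤ r) : OscAlongLE f A r :=
  fun x y hxy => (h x y (hxy.mono (compl_subset_compl.2 hAB))).trans hsr

theorem union (hA : OscAlongLE f A r) (hB : OscAlongLE f B s) : OscAlongLE f (A ∪ B) (r + s) := by
  classical
  intro x y hxy
  have hxz : EqOn x (A.piecewise y x) Aᶜ := fun γ hγ => (piecewise_eq_of_notMem A y x hγ).symm
  have hzy : EqOn (A.piecewise y x) y Bᶜ := by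
    intro γ hγ
    by_cases hγA : γ ∈ A
    · exact piecewise_eq_of_mem A y x hγA
    · rw [piecewise_eq_of_notMem A y x hγA]
      exact hxy fun hγAB => hγAB.elim hγA hγ
  exact (dist_triangle _ _ _).trans (add_le_add (hA _ _ hxz) (hB _ _ hzy))

theorem zero_of_forall_singleton {F : Finset Γ} (h : ∀ γ ∈ F, OscAlongLE f {γ} 0) :
    OscAlongLE f F 0 := by
  classical
  induction F using Finset.induction_on with
  | empty =>
    intro x y hxy
    rw [show x = y from funext fun γ => hxy (Finset.notMem_empty γ)]
    exact (dist_self _).le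
  | insert γ F _ ih =>
    have hF : OscAlongLE f F 0 := ih fun γ' hγ' => h γ' (F.mem_insert_of_mem hγ')
    rw [Finset.coe_insert, insert_eq, ← add_zero (0 : ℝ)]
    exact (h γ (F.mem_insert_self γ)).union hF

end OscAlongLE

theorem exists_nat_not_oscAlongLE (h : ¬OscAlongLE f A 0) :
    ∃ k : ℕ, ¬OscAlongLE f A (1 / (k + 1)) := by
  simp only [OscAlongLE, not_forall, not_le] at h ⊢
  obtain ⟨x, y, hxy, hpos⟩ := h
  obtain ⟨k, hk⟩ := exists_nat_one_div_lt hpos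
  exact ⟨k, x, y, hxy, hk⟩

theorem oscAlongLE_iff_forall_piecewise [∀ γ, Decidable (γ ∈ A)] :
    OscAlongLE f A r ↔ ∀ p : (Γ → X) × (Γ → X), dist (f p.1) (f (A.piecewise p.2 p.1)) ≤ r := by
  refine ⟨fun h p => h _ _ fun γ hγ => (piecewise_eq_of_notMem A _ _ hγ).symm,
    fun h x y hxy => ?_⟩
  have hy : A.piecewise y x = y := by
    ext γ
    by_cases hγ : γ ∈ A
    · exact piecewise_eq_of_mem A y x hγ
    · rw [piecewise_eq_of_notMem A y x hγ, hxy hγ]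
  simpa only [hy] using h (x, y)

theorem exists_finset_oscAlongLE_compl_of_uniformContinuous [UniformSpace X] {ε : ℝ}
    (hf : UniformContinuous f) (hε : 0 < ε) : ∃ F : Finset Γ, OscAlongLE f (F : Set Γ)ᶜ ε := by
  have hclose := hf (Metric.dist_mem_uniformity hε)
  rw [Filter.mem_map, Pi.uniformity, Filter.mem_iInf] at hclose
  obtain ⟨I, hI, V, hV, hVclose⟩ := hclose
  refine ⟨hI.toFinset, fun x y hxy => ?_⟩
  have hmem : (x, y) ∈ ⋂ i, V i := mem_iInter.2 fun i => by
    obtain ⟨W, hW, hWV⟩ := hV i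
    have hi : x i = y i := hxy fun hiI => hiI (hI.mem_toFinset.2 i.2)
    exact hWV (by simpa only [mem_preimage, hi] using refl_mem_uniformity hW)
  rw [← hVclose] at hmem
  exact le_of_lt hmem

/-- The restriction of a point of `X ^ Γ` to the coordinates `v i`. -/
def reindex (X : Type*) [TopologicalSpace X] {ι : Type*} (v : ι → Γ) : C(Γ → X, ι → X) :=
  ⟨fun x => x ∘ v, by fun_prop⟩

theorem exists_dist_comp_reindex_le [TopologicalSpace X] [CompactSpace X] [Nonempty X] {ι : Type*}
    {v : ι → Γ} {f : C(Γ → X, ℝ)} (hr : 0 ≤ r) (h : OscAlongLE f (range v)ᶜ r) :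
    ∃ g : C(ι → X, ℝ), dist f (g.comp (reindex X v)) ≤ r := by
  let x₀ : Γ → X := Classical.arbitrary _
  have hext : Continuous fun z : ι → X => Function.extend v z x₀ := by
    refine continuous_pi fun γ => ?_
    by_cases hγ : ∃ i, v i = γ
    · simp only [Function.extend, dif_pos hγ]
      fun_prop
    · simp only [Function.extend, dif_neg hγ]
      fun_prop
  refine ⟨⟨fun z => f (Function.extend v z x₀), f.continuous.comp hext⟩,
    (ContinuousMap.dist_le hr).2 fun x => h _ _ ?_⟩
  rw [compl_compl]
  rintro _ ⟨i, rfl⟩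
  have hfactors : (x ∘ v).FactorsThrough v := fun i j hij => congrArg x hij
  exact (hfactors.extend_apply x₀ i).symm

variable [TopologicalSpace X] [CompactSpace X] [R1Space X] {ε : ℝ}

theorem exists_finset_oscAlongLE_compl (hf : Continuous f) (hε : 0 < ε) :
    ∃ F : Finset Γ, OscAlongLE f (F : Set Γ)ᶜ ε :=
  let _ : UniformSpace X := uniformSpaceOfCompactR1
  exists_finset_oscAlongLE_compl_of_uniformContinuous
    (CompactSpace.uniformContinuous_of_continuous hf) hε

theorem exists_finset_forall_not_oscAlongLE_singleton (hf : Continuous f) (hε : 0 < ε) :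
    ∃ F : Finset Γ, OscAlongLE f (F : Set Γ)ᶜ ε ∧ ∀ γ ∈ F, ¬OscAlongLE f {γ} 0 := by
  classical
  obtain ⟨F, hF⟩ := exists_finset_oscAlongLE_compl hf hε
  have hirrelevant : OscAlongLE f (F.filter fun γ => OscAlongLE f {γ} 0) 0 :=
    .zero_of_forall_singleton fun γ hγ => (Finset.mem_filter.1 hγ).2
  refine ⟨F.filter fun γ => ¬OscAlongLE f {γ} 0, (hF.union hirrelevant).mono ?_ (add_zero ε).le,
    fun γ hγ => (Finset.mem_filter.1 hγ).2⟩
  intro γ hγ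
  by_cases hγF : γ ∈ F <;> simp_all

end OscAlong

section BaireSigmaAlgebra

attribute [local instance] BaCp

section Separable

variable {K : Type*} [TopologicalSpace K]

theorem measurable_eval_baCp (t : K) : Measurable fun f : C(K, ℝ) => f t :=
  measurable_iff_comap_le.2 (le_iSup (fun t : K => MeasurableSpace.comap (fun f : C(K, ℝ) => f t)
    Real.measurableSpace) t)

theorem measurable_baCp_of_eval {Ω : Type*} [MeasurableSpace Ω] {φ : Ω → C(K, ℝ)}
    (hφ : ∀ t, Measurable fun ω => φ ω t) : Measurable φ := by
  rw [measurable_iff_comap_le, BaCp, MeasurableSpace.comap_iSup]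
  refine iSup_le fun t => ?_
  rw [MeasurableSpace.comap_comp]
  exact (hφ t).comap_le

theorem baCp_le_borel : BaCp K ≤ borel C(K, ℝ) := by
  refine iSup_le fun t => ?_
  borelize C(K, ℝ)
  exact (continuous_eval_const t).measurable.comap_le

theorem measurableSet_forall_le_of_separableSpace {Ω : Type*} [MeasurableSpace Ω]
    [SeparableSpace K] {g : Ω → K → ℝ} (hg : ∀ ω, Continuous (g ω))
    (hgm : ∀ t, Measurable fun ω => g ω t) (r : ℝ) : MeasurableSet {ω | ∀ t, g ω t ≤ r} := by
  obtain ⟨D, hDc, hDd⟩ := exists_countable_dense K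
  have hD : {ω | ∀ t, g ω t ≤ r} = ⋂ t ∈ D, {ω | g ω t ≤ r} := by
    ext ω
    simp only [mem_iInter]
    refine ⟨fun h t _ => h t, fun h t => ?_⟩
    exact closure_minimal h (isClosed_le (hg ω) continuous_const) (hDd t)
  rw [hD]
  exact .biInter hDc fun t _ => measurableSet_le (hgm t) measurable_const

theorem borel_le_baCp_of_countable_approx [CompactSpace K] [SeparableSpace K] {ι : Type*}
    [Countable ι] {T : ι → C(K, ℝ) → C(K, ℝ)} (hT : ∀ i, Measurable[_, ⊤] (T i))
    (happrox : ∀ f, f ∈ closure (range fun i => T i f)) : borel C(K, ℝ) ≤ BaCp K := by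
  refine MeasurableSpace.generateFrom_le fun U (hU : IsOpen U) => ?_
  have hUeq : U = ⋃ (i : ι) (k : ℕ), {f | ∀ t, dist (f t) (T i f t) ≤ 1 / (k + 1)} ∩
      T i ⁻¹' {g | Metric.closedBall g (1 / (k + 1)) ⊆ U} := by
    ext f
    simp only [mem_iUnion]
    have hball (i : ι) (k : ℕ) : (∀ t, dist (f t) (T i f t) ≤ 1 / (k + 1)) ↔
        f ∈ Metric.closedBall (T i f) (1 / (k + 1)) :=
      (ContinuousMap.dist_le Nat.one_div_pos_of_nat.le).symm
    refine ⟨fun hf => ?_, fun ⟨i, k, hfi, hiU⟩ => hiU ((hball i k).1 hfi)⟩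
    obtain ⟨ρ, hρ, hρU⟩ := Metric.isOpen_iff.1 hU f hf
    obtain ⟨k, hk⟩ := exists_nat_one_div_lt (half_pos hρ)
    obtain ⟨_, ⟨i, rfl⟩, hi⟩ := Metric.mem_closure_iff.1 (happrox f) (1 / (k + 1))
      Nat.one_div_pos_of_nat
    refine ⟨i, k, (hball i k).2 hi.le, fun g hg => hρU ?_⟩
    calc dist g f ≤ dist g (T i f) + dist f (T i f) := dist_triangle_right _ _ _
      _ ≤ 1 / (k + 1) + 1 / (k + 1) := add_le_add hg hi.le
      _ < ρ := by linarith
  rw [hUeq]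
  have hTt (i : ι) (t : K) : Measurable fun f => T i f t :=
    (measurable_from_top (f := fun g : C(K, ℝ) => g t)).comp (hT i)
  refine .iUnion fun i => .iUnion fun k => .inter ?_ (hT i trivial)
  exact measurableSet_forall_le_of_separableSpace (by fun_prop)
    (fun t => (measurable_eval_baCp t).dist (hTt i t)) _

theorem borel_le_baCp_of_secondCountable [CompactSpace K] [R1Space K] [SecondCountableTopology K] :
    borel C(K, ℝ) ≤ BaCp K :=
  borel_le_baCp_of_countable_approx (T := fun i _ => denseSeq C(K, ℝ) i)
    (fun _ => @measurable_const _ _ ⊤ _ _) (denseRange_denseSeq C(K, ℝ))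

variable {Γ X : Type*} [TopologicalSpace X]

theorem measurableSet_oscAlongLE [SeparableSpace (Γ → X)] (A : Set Γ) (r : ℝ) :
    MeasurableSet {f : C(Γ → X, ℝ) | OscAlongLE f A r} := by
  classical
  have hpiecewise : Continuous fun p : (Γ → X) × (Γ → X) => A.piecewise p.2 p.1 := by
    refine continuous_pi fun γ => ?_
    by_cases hγ : γ ∈ A
    · simp only [piecewise_eq_of_mem _ _ _ hγ]
      fun_prop
    · simp only [piecewise_eq_of_notMem _ _ _ hγ]
      fun_prop
  simp only [oscAlongLE_iff_forall_piecewise]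
  exact measurableSet_forall_le_of_separableSpace (by fun_prop)
    (fun p => (measurable_eval_baCp _).dist (measurable_eval_baCp _)) r

end Separable

section Dominant

variable {Γ κ X : Type*} [TopologicalSpace X] {q : ℕ → Γ → κ} {P : Set Γ} {δ : ℝ}
  {f : C(Γ → X, ℝ)}

/-- The function `f` oscillates by more than `δ` along `P`, and for each `n` all but `δ / 4` of this
oscillation comes from a single piece of the partition `q n`. When `q` separates finite sets, the
oscillation is then due to a single coordinate; unlike that property, this one only involves
countably many conditions on `f`. -/
def IsConcentrated (q : ℕ → Γ → κ) (P : Set Γ) (δ : ℝ) (f : C(Γ → X, ℝ)) : Prop :=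
  ¬OscAlongLE f P δ ∧ ∀ n, ∃ i, OscAlongLE f (P \ q n ⁻¹' {i}) (δ / 4)

open Classical in
/-- The coordinate in `P` responsible for the oscillation of a concentrated `f` along `P`; an
arbitrary fixed coordinate if `f` is not concentrated. -/
noncomputable def dominantCoord [Nonempty Γ] (q : ℕ → Γ → κ) (P : Set Γ) (δ : ℝ)
    (f : C(Γ → X, ℝ)) : Γ :=
  if IsConcentrated q P δ f then Classical.epsilon fun γ => OscAlongLE f (P \ {γ}) (δ / 2)
  else Classical.arbitrary Γ

section Compact

variable [CompactSpace X] [R1Space X]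

theorem IsConcentrated.exists_oscAlongLE_diff_singleton [Nonempty Γ] (hq : SeparatesFinsets q)
    (hδ : 0 < δ) (h : IsConcentrated q P δ f) : ∃ γ, OscAlongLE f (P \ {γ}) (δ / 2) := by
  obtain ⟨F, hF⟩ := exists_finset_oscAlongLE_compl f.continuous (show 0 < δ / 4 by positivity)
  obtain ⟨n, hn⟩ := hq F
  obtain ⟨i, hi⟩ := h.2 n
  obtain ⟨γ, hγ⟩ : ∃ γ, (F : Set Γ) ∩ q n ⁻¹' {i} ⊆ {γ} := by
    have hsub : ((F : Set Γ) ∩ q n ⁻¹' {i}).Subsingleton :=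
      fun γ hγ γ' hγ' => hn hγ.1 hγ'.1 (hγ.2.trans hγ'.2.symm)
    obtain hempty | ⟨γ, hγ⟩ := hsub.eq_empty_or_singleton
    · exact ⟨Classical.arbitrary Γ, hempty ▸ empty_subset _⟩
    · exact ⟨γ, hγ.subset⟩
  refine ⟨γ, (hi.union hF).mono (fun γ' ⟨hP, hne⟩ => ?_) (by linarith)⟩
  by_contra hγ'
  simp only [mem_union, mem_sdiff, mem_compl_iff, not_or, not_and, not_not] at hγ'
  exact hne (hγ ⟨hγ'.2, hγ'.1 hP⟩)

theorem IsConcentrated.oscAlongLE_diff_dominantCoord [Nonempty Γ] (hq : SeparatesFinsets q)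
    (hδ : 0 < δ) (h : IsConcentrated q P δ f) :
    OscAlongLE f (P \ {dominantCoord q P δ f}) (δ / 2) := by
  rw [dominantCoord, if_pos h]
  exact Classical.epsilon_spec (h.exists_oscAlongLE_diff_singleton hq hδ)

theorem IsConcentrated.dominantCoord_mem_iff [Nonempty Γ] (hq : SeparatesFinsets q) (hδ : 0 < δ)
    (h : IsConcentrated q P δ f) (A : Set Γ) :
    dominantCoord q P δ f ∈ A ↔ ¬OscAlongLE f (P ∩ A) (δ / 2) := by
  have hdiff := h.oscAlongLE_diff_dominantCoord hq hδ
  refine ⟨fun hA hPA => h.1 ((hdiff.union hPA).mono (fun γ hγ => ?_) (add_halves δ).le),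
    fun hPA => ?_⟩
  · obtain rfl | hne := eq_or_ne γ (dominantCoord q P δ f)
    · exact .inr ⟨hγ, hA⟩
    · exact .inl ⟨hγ, hne⟩
  · by_contra hA
    exact hPA (hdiff.mono (fun γ hγ => ⟨hγ.1, fun heq => hA (heq ▸ hγ.2)⟩) le_rfl)

theorem exists_dominantCoord_eq [Nonempty Γ] (hq : SeparatesFinsets q) (hδ : 0 < δ) {γ : Γ}
    (h : ¬OscAlongLE f {γ} δ) : ∃ n i, dominantCoord q (q n ⁻¹' {i}) δ f = γ := by
  classical
  obtain ⟨F, hF⟩ := exists_finset_oscAlongLE_compl f.continuous (show 0 < δ / 4 by positivity)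
  obtain ⟨n, hn⟩ := hq (insert γ F)
  have hγP : {γ} ⊆ q n ⁻¹' {q n γ} := singleton_subset_iff.2 rfl
  have hrest : OscAlongLE f (q n ⁻¹' {q n γ} \ {γ}) (δ / 4) :=
    hF.mono (fun γ' ⟨hP, hne⟩ hγ' => hne
      (hn (Finset.mem_insert_of_mem hγ') (Finset.mem_insert_self γ F) hP)) le_rfl
  have hconc : IsConcentrated q (q n ⁻¹' {q n γ}) δ f :=
    ⟨fun hP => h (hP.mono hγP le_rfl), fun k => ⟨q k γ, hrest.mono
      (sdiff_subset_sdiff_right (singleton_subset_iff.2 rfl)) le_rfl⟩⟩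
  refine ⟨n, q n γ, (hconc.dominantCoord_mem_iff hq hδ {γ}).2 fun hosc => h ?_⟩
  exact hosc.mono (subset_inter hγP Subset.rfl) (half_le_self hδ.le)

end Compact

theorem measurableSet_isConcentrated [Countable κ] [SeparableSpace (Γ → X)] :
    MeasurableSet {f : C(Γ → X, ℝ) | IsConcentrated q P δ f} := by
  simp only [IsConcentrated, ofPred_and, ofPred_forall, ofPred_exists]
  exact (measurableSet_oscAlongLE _ _).compl.inter
    (.iInter fun _ => .iUnion fun _ => measurableSet_oscAlongLE _ _)

theorem measurable_dominantCoord [CompactSpace X] [R1Space X] [SeparableSpace X] [Countable κ]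
    [Nonempty Γ] (hq : SeparatesFinsets q) (hδ : 0 < δ) :
    Measurable[BaCp (Γ → X), ⊤] (dominantCoord q P δ) := by
  have := hq.separableSpace_pi X
  intro A _
  have hpre : dominantCoord q P δ ⁻¹' A = {f : C(Γ → X, ℝ) | IsConcentrated q P δ f}.ite
      {f | OscAlongLE f (P ∩ A) (δ / 2)}ᶜ {_f | Classical.arbitrary Γ ∈ A} := by
    ext f
    by_cases h : IsConcentrated q P δ f
    · simp [Set.ite, h, h.dominantCoord_mem_iff hq hδ]
    · simp [Set.ite, h, dominantCoord]
  rw [hpre]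
  exact measurableSet_isConcentrated.ite (measurableSet_oscAlongLE _ _).compl (.const _)

theorem exists_measurable_coords [CompactSpace X] [R1Space X] [SeparableSpace X] [Countable κ]
    [Nonempty Γ] (hq : SeparatesFinsets q) :
    ∃ e : ℕ × ℕ × κ → C(Γ → X, ℝ) → Γ, (∀ j, Measurable[_, ⊤] (e j)) ∧
      ∀ (f : C(Γ → X, ℝ)) γ, ¬OscAlongLE f {γ} 0 → ∃ j, e j f = γ := by
  refine ⟨fun j => dominantCoord q (q j.2.1 ⁻¹' {j.2.2}) (1 / (j.1 + 1)),
    fun j => measurable_dominantCoord hq Nat.one_div_pos_of_nat, fun f γ h => ?_⟩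
  obtain ⟨k, hk⟩ := exists_nat_not_oscAlongLE h
  obtain ⟨n, i, hni⟩ := exists_dominantCoord_eq hq Nat.one_div_pos_of_nat hk
  exact ⟨(k, n, i), hni⟩

end Dominant

section KunenToBorel

variable {Γ X : Type*} [TopologicalSpace X] [CompactSpace X] [R1Space X]
  [SecondCountableTopology X]

theorem mem_closure_comp_reindex [Nonempty X] {ι : Type*} {e : ι → Γ} {f : C(Γ → X, ℝ)}
    (he : ∀ γ, ¬OscAlongLE f {γ} 0 → γ ∈ range e) :
    f ∈ closure (range fun j : Σ n, (Fin n → ι) × ℕ =>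
      (denseSeq C(Fin j.1 → X, ℝ) j.2.2).comp (reindex X (e ∘ j.2.1))) := by
  refine Metric.mem_closure_iff.2 fun ε hε => ?_
  obtain ⟨F, hF, hFrel⟩ :=
    exists_finset_forall_not_oscAlongLE_singleton f.continuous (half_pos hε)
  choose J hJ using fun i => he (F.equivFin.symm i) (hFrel _ (F.equivFin.symm i).2)
  have hrange : range (e ∘ J) = F := by
    rw [show e ∘ J = Subtype.val ∘ F.equivFin.symm from funext hJ, EquivLike.range_comp]
    exact Subtype.range_coe
  rw [← hrange] at hF
  obtain ⟨g, hg⟩ := exists_dist_comp_reindex_le (half_pos hε).le hF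
  obtain ⟨k, hk⟩ := (denseRange_denseSeq C(Fin F.card → X, ℝ)).exists_dist_lt g (half_pos hε)
  have hcomp : dist (g.comp (reindex X (e ∘ J)))
      ((denseSeq C(Fin F.card → X, ℝ) k).comp (reindex X (e ∘ J))) < ε / 2 :=
    (ContinuousMap.dist_lt_iff (half_pos hε)).2
      fun x => (ContinuousMap.dist_lt_iff (half_pos hε)).1 hk (reindex X (e ∘ J) x)
  refine ⟨_, mem_range_self (⟨F.card, J, k⟩ : Σ n, (Fin n → ι) × ℕ), ?_⟩
  rw [← add_halves ε]
  exact (dist_triangle _ _ _).trans_lt (add_lt_add_of_le_of_lt hg hcomp)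

theorem IsKunen.borel_le_baCp [Nonempty X] (hΓ : IsKunen Γ) :
    borel C(Γ → X, ℝ) ≤ BaCp (Γ → X) := by
  obtain hfinite | hinfinite := finite_or_infinite Γ
  · exact borel_le_baCp_of_secondCountable
  obtain ⟨c, hc⟩ := hΓ.exists_injective_code
  have hq := separatesFinsets_res hc
  have := hq.separableSpace_pi X
  obtain ⟨e, hem, he⟩ := exists_measurable_coords (X := X) hq
  let T (j : Σ n, (Fin n → ℕ × ℕ × List Prop) × ℕ) (f : C(Γ → X, ℝ)) : C(Γ → X, ℝ) :=
    (denseSeq C(Fin j.1 → X, ℝ) j.2.2).comp (reindex X fun i => e (j.2.1 i) f)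
  have hT (j) : Measurable[_, ⊤] (T j) := fun S _ =>
    hΓ.measurable_finTuple (fun i => hem (j.2.1 i))
      (t := {v | (denseSeq C(Fin j.1 → X, ℝ) j.2.2).comp (reindex X v) ∈ S}) trivial
  exact borel_le_baCp_of_countable_approx hT
    fun f => mem_closure_comp_reindex (e := fun j => e j f) (he f)

end KunenToBorel

section BorelToKunen

variable {Γ X : Type*} [TopologicalSpace X] {u : C(X, ℝ)}

/-- The function `x ↦ u (x α) + 2 * u (x β)` on `X ^ Γ`. The weights `1` and `2` make the pair
`(α, β)` recoverable from it when `u` takes the values `0` and `1`. -/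
def pairFunction (u : C(X, ℝ)) (p : Γ × Γ) : C(Γ → X, ℝ) :=
  ⟨fun x => u (x p.1) + 2 * u (x p.2), by fun_prop⟩

theorem measurable_pairFunction :
    Measurable[productSigma Γ] (pairFunction u : Γ × Γ → C(Γ → X, ℝ)) := by
  let _ := productSigma Γ
  refine measurable_baCp_of_eval fun x => ?_
  have hx : Measurable[⊤] fun γ => u (x γ) := measurable_from_top
  exact (hx.comp measurable_fst_productSigma).add
    ((hx.comp measurable_snd_productSigma).const_mul 2)

variable [CompactSpace X]

theorem one_le_dist_pairFunction {a b : X} (ha : u a = 0) (hb : u b = 1) {p q : Γ × Γ}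
    (hpq : p ≠ q) : 1 ≤ dist (pairFunction u p) (pairFunction u q) := by
  classical
  contrapose! hpq
  have hmem (A : Set Γ) : (p.1 ∈ A ↔ q.1 ∈ A) ∧ (p.2 ∈ A ↔ q.2 ∈ A) := by
    let x : Γ → X := A.piecewise (fun _ => b) fun _ => a
    have hdist := (ContinuousMap.dist_apply_le_dist x).trans_lt hpq
    simp only [x, pairFunction, ContinuousMap.coe_mk, piecewise, apply_ite u, ha, hb,
      Real.dist_eq] at hdist
    by_cases hp₁ : p.1 ∈ A <;> by_cases hp₂ : p.2 ∈ A <;>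
      by_cases hq₁ : q.1 ∈ A <;> by_cases hq₂ : q.2 ∈ A <;>
      simp [hp₁, hp₂, hq₁, hq₂] at hdist ⊢ <;> norm_num at hdist
  exact Prod.ext ((hmem {q.1}).1.2 rfl) ((hmem {q.2}).2.2 rfl)

theorem isKunen_of_borel_le_baCp [T2Space X] [Nontrivial X]
    (h : borel C(Γ → X, ℝ) ≤ BaCp (Γ → X)) : IsKunen Γ := by
  obtain ⟨a, b, hab⟩ := exists_pair_ne X
  obtain ⟨u, hu0, hu1, -⟩ := exists_continuous_zero_one_of_isClosed (isClosed_singleton (x := a))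
    (isClosed_singleton (x := b)) (disjoint_singleton.2 hab)
  have hdist {p q : Γ × Γ} (hpq : p ≠ q) : 1 ≤ dist (pairFunction u p) (pairFunction u q) :=
    one_le_dist_pairFunction (hu0 rfl) (hu1 rfl) hpq
  refine top_unique fun S _ => ?_
  have hclosed : IsClosed (pairFunction u '' S) := by
    refine Metric.isClosed_of_pairwise_le_dist one_pos ?_
    rintro _ ⟨p, -, rfl⟩ _ ⟨q, -, rfl⟩ hne
    exact hdist (ne_of_apply_ne _ hne)
  have hinj : Function.Injective (pairFunction u : Γ × Γ → C(Γ → X, ℝ)) := fun p q hpq => by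
    by_contra hne
    exact absurd (hdist hne) (by simp [hpq])
  have hborel : MeasurableSet[borel C(Γ → X, ℝ)] (pairFunction u '' S) := by
    borelize C(Γ → X, ℝ)
    exact hclosed.measurableSet
  rw [← preimage_image_eq S hinj]
  exact measurable_pairFunction (h _ hborel)

end BorelToKunen

end BaireSigmaAlgebra

theorem stmt0_general (Γ X : Type*) [TopologicalSpace X] [CompactSpace X] [T2Space X]
    [SecondCountableTopology X] [Nontrivial X] :
    BaCp (Γ → X) = borel C(Γ → X, ℝ) ↔ IsKunen Γ :=
  ⟨fun h => isKunen_of_borel_le_baCp h.ge, fun h => baCp_le_borel.antisymm h.borel_le_baCp⟩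

theorem stmt0 (Γ : Type*) [Infinite Γ] :
    BaCp (Γ → Bool) = borel C(Γ → Bool, ℝ) ↔ IsKunen Γ :=
  stmt0_general Γ Bool
end

section
/- Let Γ be an infinite set and let C(2^Γ,2) denote the set of all continuous {0,1}-valued functions on 2^Γ. Then |Γ| is a Kunen cardinal if and only if the trace of Ba(C_p(2^Γ)) on C(2^Γ,2) is the full power set of C(2^Γ,2), i.e. for every subset X of C(2^Γ,2) there exists B ∈ Ba(C_p(2^Γ)) with B ∩ C(2^Γ,2) = X. -/
/-- `C(2^Γ, 2)`: the set of continuous `{0,1}`-valued functions on `2^Γ`. -/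
def Ctwo (Γ : Type*) : Set C(Γ → Bool, ℝ) := {f | ∀ x, f x = 0 ∨ f x = 1}

/-!
If `Γ` is Kunen, then measurability of the diagonal embeds `Γ` into `2^ℕ`, so `2^Γ` is separable.
Hence countably many evaluations separate `C(2^Γ)`, and `{f | f depends only on coordinates in S}`
is Baire for every `S ⊆ Γ`. The finite support map from `C(2^Γ, 2)` to the finite subsets of `Γ` is
therefore measurable for the σ-algebra generated by the sets `{F | F ⊆ S}`. That σ-algebra is
discrete: countably many sets suffice to isolate the points of a finite set one at a time, and the
Kunen property allows finitely many points to be reassembled measurably. Since the support map has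
finite fibres and points of `C(2^Γ, 2)` are countably separated, `C(2^Γ, 2)` is discrete as well.

Conversely, the pairs `(a, b)` embed into `C(2^(Γ ⊕ Γ), 2) ≃ C(2^Γ, 2)` as the products of two
coordinates, and each evaluation of this embedding is measurable for the rectangle σ-algebra.
-/

open Set Function TopologicalSpace MeasureTheory MeasurableSpace

section Measurability

variable {α β ι : Type*} [MeasurableSpace α]

theorem discreteMeasurableSpace_coe_iff {s : Set α} :
    DiscreteMeasurableSpace s ↔ ∀ X ⊆ s, ∃ B, MeasurableSet B ∧ B ∩ s = X := by
  refine ⟨fun _ X hX ↦ ?_, fun h ↦ ⟨fun X ↦ ?_⟩⟩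
  · obtain ⟨B, hB, hBX⟩ : MeasurableSet (Subtype.val ⁻¹' X : Set s) := .of_discrete
    rw [Subtype.preimage_coe_eq_preimage_coe_iff, inter_eq_right.2 hX] at hBX
    exact ⟨B, hB, inter_comm B s ▸ hBX⟩
  · obtain ⟨B, hB, hBX⟩ := h (Subtype.val '' X) (Subtype.coe_image_subset s X)
    refine ⟨B, hB, ?_⟩
    rw [← Subtype.preimage_coe_inter_self, hBX, preimage_image_eq X Subtype.val_injective]

theorem discreteMeasurableSpace_of_injective [MeasurableSpace β] [DiscreteMeasurableSpace β]
    {f : α → β} (hf : Measurable f) (hinj : Injective f) : DiscreteMeasurableSpace α where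
  forall_measurableSet S := by
    rw [← preimage_image_eq S hinj]
    exact hf .of_discrete

theorem measurableEq_of_separating [Countable ι] [MeasurableSpace β] [MeasurableEq β]
    {f : ι → α → β} (hf : ∀ i, Measurable (f i)) (hsep : ∀ x y, (∀ i, f i x = f i y) → x = y) :
    MeasurableEq α where
  measurableSet_diagonal := by
    have hdiag : diagonal α = ⋂ i, {p | f i p.1 = f i p.2} := by
      ext p
      simp only [mem_diagonal_iff, mem_iInter, mem_ofPred_eq]
      exact ⟨fun h i ↦ by rw [h], hsep p.1 p.2⟩
    rw [hdiag]
    exact .iInter fun i ↦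
      measurableSet_eq_fun ((hf i).comp measurable_fst) ((hf i).comp measurable_snd)

theorem exists_seq_measurableSet_forall_mk_mem_iff [MeasurableSpace β] {S : Set (α × β)}
    (hS : MeasurableSet S) :
    ∃ C : ℕ → Set α, (∀ n, MeasurableSet (C n)) ∧
      ∀ a a', (∀ n, a ∈ C n ↔ a' ∈ C n) → ∀ b, (a, b) ∈ S ↔ (a', b) ∈ S := by
  rw [← generateFrom_prod] at hS
  induction S, hS using generateFrom_induction with
  | hC S hS _ =>
    obtain ⟨A, hA, B, -, rfl⟩ := hS
    exact ⟨fun _ ↦ A, fun _ ↦ hA, fun a a' h b ↦ and_congr_left' (h 0)⟩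
  | empty => exact ⟨fun _ ↦ ∅, fun _ ↦ .empty, fun _ _ _ _ ↦ Iff.rfl⟩
  | compl S _ ih =>
    obtain ⟨C, hCm, hC⟩ := ih
    exact ⟨C, hCm, fun a a' h b ↦ not_congr (hC a a' h b)⟩
  | iUnion S _ ih =>
    choose C hCm hC using ih
    refine ⟨fun n ↦ C n.unpair.1 n.unpair.2, fun n ↦ hCm _ _, fun a a' h b ↦ ?_⟩
    simp only [mem_iUnion]
    exact exists_congr fun n ↦ hC n a a' (fun k ↦ by simpa using h (Nat.pair n k)) b

theorem countablySeparated_of_measurableEq [MeasurableEq α] : CountablySeparated α := by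
  obtain ⟨C, hCm, hC⟩ :=
    exists_seq_measurableSet_forall_mk_mem_iff (measurableSet_diagonal (α := α))
  refine countablySeparated_def.2 ⟨range C, countable_range C, forall_mem_range.2 hCm, ?_⟩
  intro x _ y _ h
  exact (hC x y (forall_mem_range.1 h) y).2 rfl

theorem discreteMeasurableSpace_of_exists_eq_self [MeasurableEq α] [Countable ι] {h : ι → α → α}
    (hm : ∀ i, Measurable[_, ⊤] (h i)) (hfix : ∀ x, ∃ i, h i x = x) :
    DiscreteMeasurableSpace α where
  forall_measurableSet X := by
    have hX : X = ⋃ i, h i ⁻¹' X ∩ {x | h i x = x} := by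
      ext x
      simp only [mem_iUnion, mem_inter_iff, mem_preimage, mem_ofPred_eq]
      refine ⟨fun hx ↦ ?_, fun ⟨_, hi, hix⟩ ↦ hix ▸ hi⟩
      obtain ⟨i, hi⟩ := hfix x
      exact ⟨i, hi.symm ▸ hx, hi⟩
    rw [hX]
    exact .iUnion fun i ↦ (hm i trivial).inter
      (measurableSet_eq_fun ((hm i).mono le_rfl le_top) measurable_id)

theorem discreteMeasurableSpace_of_countable_fibers [MeasurableEq α] [MeasurableSpace β]
    [DiscreteMeasurableSpace β] {s : α → β} (hs : Measurable s)
    (hfib : ∀ b, (s ⁻¹' {b}).Countable) : DiscreteMeasurableSpace α := by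
  cases isEmpty_or_nonempty α
  · infer_instance
  choose e he using fun b ↦ countable_iff_exists_subset_range.1 (hfib b)
  refine discreteMeasurableSpace_of_exists_eq_self (h := fun k x ↦ e (s x) k) (fun k S _ ↦ ?_)
    fun x ↦ he (s x) rfl
  exact hs (.of_discrete (s := {b | e b k ∈ S}))

end Measurability

section Separability

variable {ι α X : Type*}

theorem dense_pi_iff_forall_finset {Y : ι → Type*} [∀ i, TopologicalSpace (Y i)]
    [∀ i, DiscreteTopology (Y i)] {D : Set (∀ i, Y i)} :
    Dense D ↔ ∀ (F : Finset ι) (x : ∀ i, Y i), ∃ q ∈ D, ∀ i ∈ F, q i = x i := by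
  refine ⟨fun hD F x ↦ ?_, fun h ↦ dense_iff_inter_open.2 fun U hU ⟨x, hx⟩ ↦ ?_⟩
  · have hopen : IsOpen ((F : Set ι).pi fun i ↦ {x i}) :=
      isOpen_set_pi F.finite_toSet fun i _ ↦ isOpen_discrete _
    obtain ⟨q, hq, hqD⟩ := hD.inter_open_nonempty _ hopen ⟨x, fun i _ ↦ rfl⟩
    exact ⟨q, hqD, hq⟩
  · obtain ⟨F, u, hu, hsub⟩ := isOpen_pi_iff.1 hU x hx
    obtain ⟨q, hqD, hq⟩ := h F x
    exact ⟨q, hsub fun i hi ↦ hq i hi ▸ (hu i hi).2, hqD⟩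

theorem separableSpace_pi_bool_of_injective [TopologicalSpace X] [CompactSpace X] [T2Space X]
    [TotallyDisconnectedSpace X] [SecondCountableTopology X] {c : α → X} (hc : Injective c) :
    SeparableSpace (α → Bool) := by
  classical
  have : Countable (Clopens X) := Clopens.countable_iff_secondCountable.2 inferInstance
  refine ⟨range fun (U : Clopens X) a ↦ decide (c a ∈ U), countable_range _,
    dense_pi_iff_forall_finset.2 fun F x ↦ ?_⟩
  let fiberImage (b : Bool) : Set X := c '' {a ∈ (F : Set α) | x a = b}
  have isClosed_fiberImage (b : Bool) : IsClosed (fiberImage b) :=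
    ((F.finite_toSet.subset (sep_subset _ _)).image c).isClosed
  have fiberImage_subset : fiberImage true ⊆ (fiberImage false)ᶜ := by
    rintro _ ⟨a, ha, rfl⟩ ⟨a', ha', h⟩
    simp [← hc h, ha'.2] at ha
  obtain ⟨U, hU, htrue, hfalse⟩ := exists_clopen_of_closed_subset_open
    (isClosed_fiberImage true) (isClosed_fiberImage false).isOpen_compl fiberImage_subset
  refine ⟨_, ⟨⟨U, hU⟩, rfl⟩, fun a ha ↦ ?_⟩
  cases hx : x a
  · exact decide_eq_false fun haU ↦ hfalse haU ⟨a, ⟨ha, hx⟩, rfl⟩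
  · exact decide_eq_true (htrue ⟨a, ⟨ha, hx⟩, rfl⟩)

theorem exists_seq_forall_finset_inter_eq (α : Type*) [SeparableSpace (α → Bool)] :
    ∃ A : ℕ → Set α, ∀ (F : Finset α) (B : Set α), ∃ n, (F : Set α) ∩ A n = ↑F ∩ B := by
  classical
  refine ⟨fun n ↦ {a | denseSeq (α → Bool) n a = true}, fun F B ↦ ?_⟩
  obtain ⟨_, ⟨n, rfl⟩, hn⟩ := dense_pi_iff_forall_finset.1
    (denseRange_denseSeq (α → Bool)) F (fun a ↦ decide (a ∈ B))
  refine ⟨n, ext fun a ↦ and_congr_right fun ha ↦ ?_⟩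
  rw [mem_ofPred_eq, hn a ha, decide_eq_true_iff]

end Separability

theorem isKunen_iff_discreteMeasurableSpace_prod {Γ : Type*} [MeasurableSpace Γ]
    [DiscreteMeasurableSpace Γ] : IsKunen Γ ↔ DiscreteMeasurableSpace (Γ × Γ) := by
  have hsigma : productSigma Γ = Prod.instMeasurableSpace := by
    rw [← generateFrom_prod, productSigma]
    congr 1
    ext S
    simp [mem_image2, MeasurableSet.of_discrete, eq_comm]
  rw [IsKunen, hsigma]
  exact ⟨fun h ↦ ⟨fun _ ↦ h ▸ trivial⟩, fun _ ↦ top_unique fun _ _ ↦ .of_discrete⟩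

namespace IsKunen

variable {Γ Δ Y Z : Type*}

theorem of_injective (hK : IsKunen Δ) {g : Γ → Δ} (hg : Injective g) : IsKunen Γ := by
  let _ : MeasurableSpace Γ := ⊤
  let _ : MeasurableSpace Δ := ⊤
  rw [isKunen_iff_discreteMeasurableSpace_prod] at hK ⊢
  exact discreteMeasurableSpace_of_injective (measurable_from_top.prodMap measurable_from_top)
    (hg.prodMap hg)

theorem finset [Infinite Γ] (hK : IsKunen Γ) : IsKunen (Finset Γ) := by
  obtain ⟨e⟩ := Cardinal.eq.1 (Cardinal.mk_finset_of_infinite Γ)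
  exact hK.of_injective e.injective

theorem measurable_comp₂ (hK : IsKunen Γ) [MeasurableSpace Y] {f g : Y → Γ}
    (hf : Measurable[_, ⊤] f) (hg : Measurable[_, ⊤] g) (op : Γ → Γ → Z) :
    Measurable[_, ⊤] fun y ↦ op (f y) (g y) := by
  let _ : MeasurableSpace Γ := ⊤
  have := isKunen_iff_discreteMeasurableSpace_prod.1 hK
  intro S _
  exact (hf.prodMk hg) (.of_discrete (s := {p | op p.1 p.2 ∈ S}))

theorem separableSpace_pi_bool (hK : IsKunen Γ) : SeparableSpace (Γ → Bool) := by
  let _ : MeasurableSpace Γ := ⊤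
  have := isKunen_iff_discreteMeasurableSpace_prod.1 hK
  have : MeasurableEq Γ := ⟨.of_discrete⟩
  have := countablySeparated_of_measurableEq (α := Γ)
  obtain ⟨c, -, hc⟩ := measurable_injection_nat_bool_of_countablySeparated Γ
  exact separableSpace_pi_bool_of_injective hc

end IsKunen

section FinsetSigma

variable {α : Type*}

/-- The σ-algebra on the finite subsets of `α` generated by the sets `{F | F ⊆ A}`, where `A`
ranges over all subsets of `α`. It is the one that supports of continuous functions are
measurable for. -/
abbrev finsetSigma (α : Type*) : MeasurableSpace (Finset α) :=
  generateFrom (range fun A : Set α ↦ {F : Finset α | ↑F ⊆ A})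

attribute [local instance] finsetSigma

theorem measurableSet_setOf_coe_subset (A : Set α) : MeasurableSet {F : Finset α | ↑F ⊆ A} :=
  measurableSet_generateFrom (mem_range_self A)

open Classical in
/-- The part of `F` inside `A` if this is at most one point, and `∅` otherwise. For fixed `A` it
is a measurable way of picking a point out of a finite set. -/
noncomputable def isolatedPart (A : Set α) (F : Finset α) : Finset α :=
  if (↑F ∩ A).Subsingleton then {a ∈ F | a ∈ A} else ∅

theorem coe_isolatedPart {A : Set α} {F : Finset α} (h : (↑F ∩ A).Subsingleton) :
    (isolatedPart A F : Set α) = ↑F ∩ A := by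
  rw [isolatedPart, if_pos h, Finset.coe_filter]
  rfl

theorem isolatedPart_eq_singleton {A : Set α} {F : Finset α} {a : α} (h : ↑F ∩ A = {a}) :
    isolatedPart A F = {a} := by
  rw [← Finset.coe_inj, coe_isolatedPart (h ▸ subsingleton_singleton), h, Finset.coe_singleton]

theorem isolatedPart_mem_iff {A : Set α} {F : Finset α} {𝒮 : Set (Finset α)} (h𝒮 : ∅ ∈ 𝒮) :
    isolatedPart A F ∈ 𝒮 ↔ ¬(↑F ∩ A).Subsingleton ∨ ↑F ⊆ Aᶜ ∪ {a | {a} ∈ 𝒮} := by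
  by_cases hsub : (↑F ∩ A).Subsingleton
  · rw [← inter_subset, or_iff_right (not_not.2 hsub)]
    rcases hsub.eq_empty_or_singleton with hempty | ⟨a, ha⟩
    · have hpart : isolatedPart A F = ∅ := by
        rw [← Finset.coe_inj, coe_isolatedPart hsub, hempty, Finset.coe_empty]
      simp [hpart, hempty, h𝒮]
    · rw [isolatedPart_eq_singleton ha, ha, singleton_subset_iff, mem_ofPred_eq]
  · simp [isolatedPart, hsub, h𝒮]

theorem measurableEq_finset [SeparableSpace (α → Bool)] : MeasurableEq (Finset α) := by
  classical
  obtain ⟨A, hA⟩ := exists_seq_forall_finset_inter_eq α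
  refine measurableEq_of_separating (f := fun n (F : Finset α) ↦ (F : Set α) ⊆ A n)
    (fun n ↦ measurableSet_setOfPred.1 (measurableSet_setOf_coe_subset (A n))) fun F G h ↦ ?_
  have subset_of_forall {F G : Finset α} (h : ∀ n, (↑F ⊆ A n) → ↑G ⊆ A n) : G ⊆ F := by
    obtain ⟨n, hn⟩ := hA (F ∪ G) F
    have hFn : (F : Set α) ⊆ A n := fun a ha ↦ (hn.ge ⟨by simpa using .inl ha, ha⟩).2
    exact fun a ha ↦ Finset.mem_coe.1
      (hn.le ⟨by simpa using .inr ha, h n hFn (Finset.mem_coe.2 ha)⟩).2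
  exact (subset_of_forall fun n ↦ (h n).mpr).antisymm (subset_of_forall fun n ↦ (h n).mp)

theorem measurableSet_setOf_subsingleton_inter [SeparableSpace (α → Bool)] (A : Set α) :
    MeasurableSet {F : Finset α | (↑F ∩ A).Subsingleton} := by
  obtain ⟨C, hC⟩ := exists_seq_forall_finset_inter_eq α
  have heq : {F : Finset α | (↑F ∩ A).Subsingleton} =
      ⋂ n, {F : Finset α | ↑F ⊆ Aᶜ ∪ C n} ∪ {F : Finset α | ↑F ⊆ Aᶜ ∪ (C n)ᶜ} := by
    ext F
    simp only [mem_iInter, mem_union, mem_ofPred_eq, subset_def, mem_compl_iff, Finset.mem_coe]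
    refine ⟨fun h n ↦ ?_, fun h a ha b hb ↦ ?_⟩
    · by_contra! ⟨⟨a, haF, haA, haC⟩, b, hbF, hbA, hbC⟩
      exact haC (h ⟨hbF, hbA⟩ ⟨haF, haA⟩ ▸ hbC)
    · obtain ⟨n, hn⟩ := hC F {a}
      have haC : a ∈ C n := (hn.ge ⟨ha.1, rfl⟩).2
      rcases h n with h | h
      · exact ((hn.le ⟨hb.1, (h b hb.1).resolve_left (not_not.2 hb.2)⟩).2).symm
      · exact absurd haC ((h a ha.1).resolve_left (not_not.2 ha.2))
  rw [heq]
  exact .iInter fun n ↦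
    (measurableSet_setOf_coe_subset _).union (measurableSet_setOf_coe_subset _)

theorem measurable_isolatedPart [SeparableSpace (α → Bool)] (A : Set α) :
    Measurable[_, ⊤] (isolatedPart A) := by
  have of_empty_mem {𝒮 : Set (Finset α)} (h𝒮 : ∅ ∈ 𝒮) : MeasurableSet (isolatedPart A ⁻¹' 𝒮) := by
    have heq : isolatedPart A ⁻¹' 𝒮 = {F : Finset α | (↑F ∩ A).Subsingleton}ᶜ ∪
        {F : Finset α | ↑F ⊆ Aᶜ ∪ {a | {a} ∈ 𝒮}} := ext fun F ↦ isolatedPart_mem_iff h𝒮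
    rw [heq]
    exact (measurableSet_setOf_subsingleton_inter A).compl.union (measurableSet_setOf_coe_subset _)
  intro 𝒮 _
  by_cases h𝒮 : ∅ ∈ 𝒮
  · exact of_empty_mem h𝒮
  · exact .of_compl (of_empty_mem (mem_compl h𝒮))

theorem IsKunen.discreteMeasurableSpace_finset [Infinite α] (hK : IsKunen α) :
    DiscreteMeasurableSpace (Finset α) := by
  classical
  have := hK.separableSpace_pi_bool
  have := measurableEq_finset (α := α)
  obtain ⟨A, hA⟩ := exists_seq_forall_finset_inter_eq α
  refine discreteMeasurableSpace_of_exists_eq_self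
    (h := fun (I : Finset ℕ) F ↦ I.biUnion fun n ↦ isolatedPart (A n) F) (fun I ↦ ?_) fun F ↦ ?_
  · induction I using Finset.induction_on with
    | empty => exact @measurable_const _ _ ⊤ _ ∅
    | insert n I _ ih =>
      simp only [Finset.biUnion_insert]
      exact hK.finset.measurable_comp₂ (measurable_isolatedPart (A n)) ih (· ∪ ·)
  · choose n hn using fun a ↦ hA F {a}
    refine ⟨F.image n, ?_⟩
    have hsingle : ∀ a ∈ F, isolatedPart (A (n a)) F = {a} := fun a ha ↦
      isolatedPart_eq_singleton (by rw [hn a, inter_eq_right.2 (by simpa using ha)])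
    rw [Finset.image_biUnion, Finset.biUnion_congr rfl hsingle, Finset.biUnion_singleton_eq_self]

end FinsetSigma

section EssentialCoords

variable {ι Y : Type*} {X : ι → Type*} {f : (∀ i, X i) → Y} {S T : Set ι}

open Classical in
theorem dependsOn_iff_forall_piecewise :
    DependsOn f S ↔ ∀ x y, f (S.piecewise x y) = f x := by
  refine ⟨fun h x y ↦ h fun i hi ↦ piecewise_eq_of_mem _ _ _ hi, fun h x y hxy ↦ ?_⟩
  have hpiecewise : S.piecewise x y = S.piecewise y y := by
    ext i
    by_cases hi : i ∈ S <;> simp [hi, hxy]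
  rw [← h x y, hpiecewise, h y y]

theorem dependsOn_inter (hS : DependsOn f S) (hT : DependsOn f T) : DependsOn f (S ∩ T) := by
  classical
  intro x y hxy
  calc f x = f (S.piecewise x y) := hS fun i hi ↦ (piecewise_eq_of_mem _ _ _ hi).symm
    _ = f y := hT fun i hi ↦ by
      by_cases hiS : i ∈ S
      · rw [piecewise_eq_of_mem _ _ _ hiS, hxy i ⟨hiS, hi⟩]
      · rw [piecewise_eq_of_notMem _ _ _ hiS]

/-- The coordinates that a function on a product genuinely depends on. -/
def essentialCoords (f : (∀ i, X i) → Y) : Set ι := {i | ¬DependsOn f {i}ᶜ}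

theorem essentialCoords_subset (hS : DependsOn f S) : essentialCoords f ⊆ S := fun _ hi ↦
  by_contra fun hiS ↦ hi (hS.mono (subset_compl_singleton_iff.2 hiS))

theorem dependsOn_compl_finset {G : Finset ι} (hG : ∀ i ∈ G, DependsOn f {i}ᶜ) :
    DependsOn f (G : Set ι)ᶜ := by
  classical
  induction G using Finset.induction_on with
  | empty => simpa using dependsOn_univ f
  | insert i G _ ih =>
    rw [Finset.forall_mem_insert] at hG
    rw [Finset.coe_insert, insert_eq, compl_union]
    exact dependsOn_inter hG.1 (ih hG.2)

theorem essentialCoords_subset_iff {F : Finset ι} (hF : DependsOn f F) :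
    essentialCoords f ⊆ S ↔ DependsOn f S := by
  classical
  refine ⟨fun h ↦ ?_, essentialCoords_subset⟩
  let inessential : Finset ι := {i ∈ F | DependsOn f {i}ᶜ}
  have hdep : DependsOn f (inessential : Set ι)ᶜ :=
    dependsOn_compl_finset fun i hi ↦ (Finset.mem_filter.1 hi).2
  refine (dependsOn_inter hF hdep).mono ?_
  rintro i ⟨hiF, hi⟩
  exact h fun hdep_i ↦ hi (Finset.mem_coe.2 (Finset.mem_filter.2 ⟨hiF, hdep_i⟩))

theorem exists_finset_dependsOn [∀ i, TopologicalSpace (X i)] [∀ i, CompactSpace (X i)]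
    (hf : IsLocallyConstant f) : ∃ F : Finset ι, DependsOn f F := by
  classical
  have hlocal (x : ∀ i, X i) : ∃ (F : Finset ι) (U : Set (∀ i, X i)), U ∈ nhds x ∧
      ∀ y z, y ∈ U → (∀ i ∈ F, y i = z i) → f y = f z := by
    obtain ⟨F, u, hu, hsub⟩ := isOpen_pi_iff.1 (hf.isOpen_fiber (f x)) x rfl
    refine ⟨F, (F : Set ι).pi u,
      (isOpen_set_pi F.finite_toSet fun i hi ↦ (hu i hi).1).mem_nhds fun i hi ↦ (hu i hi).2,
      fun y z hy hyz ↦ ?_⟩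
    have hz : z ∈ (F : Set ι).pi u := fun i hi ↦ hyz i hi ▸ hy i hi
    exact (hsub hy).trans (hsub hz).symm
  choose F U hU hFU using hlocal
  obtain ⟨t, ht⟩ := CompactSpace.elim_nhds_subcover U hU
  refine ⟨t.biUnion F, fun y z hyz ↦ ?_⟩
  obtain ⟨x, hxt, hyx⟩ := mem_iUnion₂.1 (ht.ge (mem_univ y))
  exact hFU x y z hyx fun i hi ↦ hyz i (Finset.mem_biUnion.2 ⟨x, hxt, hi⟩)

theorem finite_setOf_dependsOn [∀ i, Finite (X i)] (hS : S.Finite) {T : Set Y} (hT : T.Finite) :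
    {f : (∀ i, X i) → Y | DependsOn f S ∧ ∀ x, f x ∈ T}.Finite := by
  have := hS.to_subtype
  have := hT.to_subtype
  cases isEmpty_or_nonempty (∀ i, X i)
  · exact toFinite _
  refine (finite_range fun (g : (∀ i : S, X i) → T) x ↦ (g (S.domRestrict x) : Y)).subset ?_
  rintro f ⟨hfS, hfT⟩
  have : Nonempty T := Nonempty.map (codRestrict f T hfT) inferInstance
  have hdep : DependsOn (codRestrict f T hfT) S := fun x y h ↦ Subtype.ext (hfS h)
  obtain ⟨g, hg⟩ := dependsOn_iff_exists_comp.1 hdep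
  exact ⟨g, funext fun x ↦ congrArg Subtype.val (congrFun hg x).symm⟩

end EssentialCoords

attribute [local instance] BaCp finsetSigma

section BaireSigma

theorem measurable_continuousMap_iff {K α : Type*} [TopologicalSpace K] [MeasurableSpace α]
    {φ : α → C(K, ℝ)} : Measurable φ ↔ ∀ t, Measurable fun a ↦ φ a t := by
  simp only [measurable_iff_comap_le, BaCp, MeasurableSpace.comap_iSup, iSup_le_iff,
    MeasurableSpace.comap_comp, comp_def]

theorem measurable_continuousMap_eval {K : Type*} [TopologicalSpace K] (t : K) :
    Measurable fun f : C(K, ℝ) ↦ f t :=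
  measurable_continuousMap_iff.1 measurable_id t

theorem measurableEq_coe_continuousMap {K : Type*} [TopologicalSpace K] [SeparableSpace K]
    (s : Set C(K, ℝ)) : MeasurableEq s := by
  obtain ⟨D, hDc, hD⟩ := exists_countable_dense K
  have := hDc.to_subtype
  refine measurableEq_of_separating (f := fun (t : D) (f : s) ↦ (f : C(K, ℝ)) t)
    (fun t ↦ (measurable_continuousMap_eval _).comp measurable_subtype_coe) fun f g h ↦ ?_
  have heq := (map_continuous f.1).ext_on hD (map_continuous g.1) fun t ht ↦ h ⟨t, ht⟩
  exact Subtype.ext (DFunLike.coe_injective heq)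

theorem measurableSet_setOf_dependsOn {ι : Type*} {X : ι → Type*} [∀ i, TopologicalSpace (X i)]
    [SeparableSpace (∀ i, X i)] (S : Set ι) :
    MeasurableSet {f : C(∀ i, X i, ℝ) | DependsOn f S} := by
  classical
  obtain ⟨D, hDc, hD⟩ := exists_countable_dense (∀ i, X i)
  have heq : {f : C(∀ i, X i, ℝ) | DependsOn f S} =
      ⋂ x ∈ D, ⋂ y ∈ D, {f | f (S.piecewise x y) = f x} := by
    ext f
    simp only [mem_iInter, mem_ofPred_eq, dependsOn_iff_forall_piecewise]
    refine ⟨fun h x _ y _ ↦ h x y, fun h x y ↦ ?_⟩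
    have hpiecewise : Continuous fun p : (∀ i, X i) × (∀ i, X i) ↦ S.piecewise p.1 p.2 := by
      refine continuous_pi fun i ↦ ?_
      by_cases hi : i ∈ S <;> simp only [piecewise, hi, if_true, if_false] <;> fun_prop
    have heq : (fun p : (∀ i, X i) × (∀ i, X i) ↦ f (S.piecewise p.1 p.2)) = fun p ↦ f p.1 :=
      ((map_continuous f).comp hpiecewise).ext_on (hD.prod hD) (by fun_prop)
        fun p hp ↦ h p.1 hp.1 p.2 hp.2
    exact congrFun heq (x, y)
  rw [heq]
  exact .biInter hDc fun x _ ↦ .biInter hDc fun y _ ↦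
    measurableSet_eq_fun (measurable_continuousMap_eval _) (measurable_continuousMap_eval _)

end BaireSigma

namespace Ctwo

variable {Γ : Type*}

theorem isLocallyConstant (f : Ctwo Γ) : IsLocallyConstant f.1 :=
  ((IsLocallyConstant.iff_continuous _).2
    ((map_continuous f.1).codRestrict (s := {0, 1}) f.2)).comp Subtype.val

theorem finite_essentialCoords (f : Ctwo Γ) : (essentialCoords f.1).Finite := by
  obtain ⟨F, hF⟩ := exists_finset_dependsOn (isLocallyConstant f)
  exact F.finite_toSet.subset (essentialCoords_subset hF)

/-- The essential coordinates of a function in `C(2^Γ, 2)`, bundled as a finite set. -/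
noncomputable def support (f : Ctwo Γ) : Finset Γ := (finite_essentialCoords f).toFinset

theorem coe_support_subset_iff {f : Ctwo Γ} {S : Set Γ} : ↑(support f) ⊆ S ↔ DependsOn f.1 S := by
  obtain ⟨F, hF⟩ := exists_finset_dependsOn (isLocallyConstant f)
  rw [support, Finite.coe_toFinset, essentialCoords_subset_iff hF]

theorem measurable_support [SeparableSpace (Γ → Bool)] :
    Measurable (support : Ctwo Γ → Finset Γ) := by
  refine measurable_generateFrom (forall_mem_range.2 fun S ↦ ?_)
  simp only [preimage_ofPred_eq, coe_support_subset_iff]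
  exact measurable_subtype_coe (measurableSet_setOf_dependsOn S)

theorem finite_support_fiber (F : Finset Γ) : (support ⁻¹' {F} : Set (Ctwo Γ)).Finite := by
  have hinj : Injective fun f : Ctwo Γ ↦ (f.1 : (Γ → Bool) → ℝ) :=
    DFunLike.coe_injective.comp Subtype.val_injective
  refine ((finite_setOf_dependsOn F.finite_toSet (toFinite {0, 1})).preimage hinj.injOn).subset ?_
  rintro f rfl
  exact ⟨coe_support_subset_iff.1 subset_rfl, f.2⟩

theorem discreteMeasurableSpace_of_isKunen [Infinite Γ] (hK : IsKunen Γ) :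
    DiscreteMeasurableSpace (Ctwo Γ) := by
  have := hK.separableSpace_pi_bool
  have := measurableEq_coe_continuousMap (Ctwo Γ)
  have := hK.discreteMeasurableSpace_finset
  exact discreteMeasurableSpace_of_countable_fibers measurable_support
    fun F ↦ (finite_support_fiber F).countable

/-- The function `x ↦ x i * x j` in `C(2^Γ, 2)`. -/
def coordMul (i j : Γ) : Ctwo Γ where
  val.toFun x := (x i).toNat * (x j).toNat
  val.continuous_toFun := by
    have continuous_coord (k : Γ) : Continuous fun x : Γ → Bool ↦ ((x k).toNat : ℝ) :=
      (continuous_of_discreteTopology (f := fun b : Bool ↦ (b.toNat : ℝ))).comp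
        (continuous_apply k)
    exact (continuous_coord i).mul (continuous_coord j)
  property x := by cases hi : x i <;> cases hj : x j <;> simp [hi, hj]

theorem coordMul_eq_one_iff {i j : Γ} {x : Γ → Bool} :
    (coordMul i j).1 x = 1 ↔ x i = true ∧ x j = true := by
  cases hi : x i <;> cases hj : x j <;> simp [coordMul, hi, hj]

theorem eq_or_eq_of_coordMul_eq {i j i' j' : Γ} (h : coordMul i j = coordMul i' j') :
    (i' = i ∨ i' = j) ∧ (j' = i ∨ j' = j) := by
  classical
  have heval := coordMul_eq_one_iff (i := i) (j := j) (x := fun k ↦ decide (k = i ∨ k = j))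
  simpa [h, coordMul_eq_one_iff] using heval

theorem isKunen_of_discreteMeasurableSpace [Infinite Γ] [DiscreteMeasurableSpace (Ctwo Γ)] :
    IsKunen Γ := by
  let _ : MeasurableSpace Γ := ⊤
  obtain ⟨e⟩ : Nonempty (Γ ⊕ Γ ≃ Γ) := Cardinal.eq.1 <| by
    simp [Cardinal.add_eq_self (Cardinal.aleph0_le_mk Γ)]
  let φ (p : Γ × Γ) : Ctwo Γ := coordMul (e (.inl p.1)) (e (.inr p.2))
  have measurable_φ : Measurable φ := by
    refine (measurable_continuousMap_iff.2 fun t ↦ ?_).subtype_mk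
    have hcoord (g : Γ → Γ) : Measurable fun a ↦ ((t (g a)).toNat : ℝ) := measurable_from_top
    exact ((hcoord (e ∘ .inl)).comp measurable_fst).mul ((hcoord (e ∘ .inr)).comp measurable_snd)
  have injective_φ : Injective φ := fun p q h ↦ by
    have hpq := eq_or_eq_of_coordMul_eq h
    simp only [e.injective.eq_iff, Sum.inl.injEq, Sum.inr.injEq, reduceCtorEq, or_false,
      false_or] at hpq
    exact (Prod.ext hpq.1 hpq.2).symm
  exact isKunen_iff_discreteMeasurableSpace_prod.2
    (discreteMeasurableSpace_of_injective measurable_φ injective_φ)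

end Ctwo

theorem stmt1 (Γ : Type*) [Infinite Γ] :
    IsKunen Γ ↔
      ∀ X ⊆ Ctwo Γ, ∃ B : Set C(Γ → Bool, ℝ),
        @MeasurableSet _ (BaCp (Γ → Bool)) B ∧ B ∩ Ctwo Γ = X := by
  rw [← discreteMeasurableSpace_coe_iff]
  exact ⟨Ctwo.discreteMeasurableSpace_of_isKunen, fun _ ↦ Ctwo.isKunen_of_discreteMeasurableSpace⟩
end

section
/- Let Γ be a set of cardinality ℵ₁. Then the Banach space C(2^Γ) is measure-compact in its weak topology: for every probability measure μ defined on the σ-algebra Ba(C(2^Γ)_w) generated by all continuous linear functionals, there exists a separable closed linear subspace X₀ of C(2^Γ) of full outer measure, μ*(X₀) = 1. -/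
/-- The Baire σ-algebra of the weak topology of a normed space `X`: the σ-algebra
generated by all continuous linear functionals on `X`. -/
def BaW (X : Type*) [NormedAddCommGroup X] [NormedSpace ℝ X] : MeasurableSpace X :=
  ⨆ φ : X →L[ℝ] ℝ, MeasurableSpace.comap φ Real.measurableSpace

/-!
Fix a base point of `2^Γ` and, for `S ⊆ Γ`, let `P S x` be the composition of `x ∈ C(2^Γ)` with the
retraction resetting the coordinates off `S` to the base point; `S ↦ P S x` is norm continuous on
the power set of `Γ`.

For a functional `φ`, the distance in measure from `φ ∘ P S` to `φ` is therefore a sequentially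
continuous function of `S`. On the power set of a set of size at most `ℵ₁` such a function is
constant on all `S` containing a suitable countable set; this is Mazur's argument, resting on an
Ulam matrix. Hence every `φ` has a countable `B` with `φ ∘ P S = φ` a.e. whenever `B ⊆ S`. If no
countable `A` made `φ ∘ P A` and `φ` uniformly `ε`-close over the unit ball of functionals, then
repeatedly adjoining such sets `B` would give an increasing sequence `A n` and functionals `φ n` in
the unit ball with `φ n (P (A (n + 1)) x - P (A n) x)` at distance at least `ε` from zero in
measure, although `P (A n) x` converges for every `x`. So one countable `A` has `φ ∘ P A = φ` a.e.
for all `φ`, and this forces the separable space `range (P A)` to have full outer measure.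
-/

open MeasureTheory Filter Topology Set
open scoped ENNReal Cardinal

section SetConvergence

variable {Γ Y : Type*}

/-- Pointwise convergence of a sequence of sets, that is, convergence of the indicator functions
in `2^Γ`. -/
def SetConverges (S : ℕ → Set Γ) (T : Set Γ) : Prop :=
  ∀ γ, ∀ᶠ j in atTop, (γ ∈ S j ↔ γ ∈ T)

/-- Sequential continuity of a function on the power set of `Γ`, identified with `2^Γ`. -/
def SetSeqContinuous [TopologicalSpace Y] (f : Set Γ → Y) : Prop :=
  ∀ ⦃S : ℕ → Set Γ⦄ ⦃T : Set Γ⦄, SetConverges S T → Tendsto (fun j => f (S j)) atTop (𝓝 (f T))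

theorem setConverges_iUnion {S : ℕ → Set Γ} (hS : Monotone S) : SetConverges S (⋃ j, S j) := by
  intro γ
  by_cases hγ : γ ∈ ⋃ j, S j
  · obtain ⟨n, hn⟩ := mem_iUnion.1 hγ
    filter_upwards [eventually_ge_atTop n] with j hj
    exact iff_of_true (hS hj hn) hγ
  · exact .of_forall fun j => iff_of_false (fun hj => hγ (mem_iUnion_of_mem j hj)) hγ

theorem setConverges_empty_of_finite {S : ℕ → Set Γ} (hS : ∀ γ, {j | γ ∈ S j}.Finite) :
    SetConverges S ∅ := by
  intro γ
  filter_upwards [Nat.cofinite_eq_atTop ▸ (hS γ).eventually_cofinite_notMem] with j hj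
  exact iff_of_false hj (notMem_empty γ)

theorem setConverges_empty_of_pairwise_disjoint {S : ℕ → Set Γ}
    (hS : Pairwise (Function.onFun Disjoint S)) : SetConverges S ∅ :=
  setConverges_empty_of_finite fun γ => Set.Subsingleton.finite fun _i hi _j hj =>
    hS.eq (not_disjoint_iff.2 ⟨γ, hi, hj⟩)

theorem SetConverges.compl {S : ℕ → Set Γ} {T : Set Γ} (h : SetConverges S T) :
    SetConverges (fun j => (S j)ᶜ) Tᶜ :=
  fun γ => (h γ).mono fun _ hj => not_congr hj

theorem SetConverges.union_left {S : ℕ → Set Γ} {T : Set Γ} (h : SetConverges S T) (B : Set Γ) :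
    SetConverges (fun j => B ∪ S j) (B ∪ T) :=
  fun γ => (h γ).mono fun _ hj => or_congr_right hj

theorem SetConverges.tendsto_boolIndicator {S : ℕ → Set Γ} {T : Set Γ} (h : SetConverges S T) :
    Tendsto (fun j => (S j).boolIndicator) atTop (𝓝 T.boolIndicator) := by
  refine tendsto_pi_nhds.2 fun γ => tendsto_nhds_of_eventually_eq ?_
  filter_upwards [h γ] with j hj
  rw [Bool.eq_iff_iff, ← mem_iff_boolIndicator, ← mem_iff_boolIndicator, hj]

end SetConvergence

section Combinatorics

variable {Γ : Type*}

theorem exists_infinite_fiber_of_uncountable {α β : Type*} [Uncountable α] [Countable β]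
    (f : α → β) : ∃ b, (f ⁻¹' {b}).Infinite := by
  by_contra! hfin
  refine not_countable_univ (α := α) ?_
  rw [← preimage_univ (f := f), ← biUnion_preimage_singleton]
  exact countable_univ.biUnion fun b _ => (hfin b).countable

theorem exists_countable_monotone_chain {D : Set Γ → Set Γ}
    (hD : ∀ A : Set Γ, A.Countable → (D A).Countable) :
    ∃ A : ℕ → Set Γ, Monotone A ∧ (∀ n, (A n).Countable) ∧ ∀ n, D (A n) ⊆ A (n + 1) := by
  let A : ℕ → Set Γ := fun n => (fun B => B ∪ D B)^[n] ∅
  have A_succ (n : ℕ) : A (n + 1) = A n ∪ D (A n) := Function.iterate_succ_apply' _ _ _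
  refine ⟨A, monotone_nat_of_le_succ fun n => ?_, fun n => ?_, fun n => ?_⟩
  · exact A_succ n ▸ subset_union_left
  · induction n with
    | zero => exact countable_empty
    | succ n ih => exact A_succ n ▸ ih.union (hD _ ih)
  · exact A_succ n ▸ subset_union_right

theorem exists_ulam_matrix (hΓ : #Γ ≤ ℵ₁) :
    ∃ W : ℕ → Γ → Set Γ, (∀ α, Monotone (W · α)) ∧ (∀ α, (⋃ k, W k α)ᶜ.Countable) ∧
      ∀ k β, {α | β ∈ W k α}.Finite := by
  obtain ⟨_, _, hord⟩ := Cardinal.exists_ord_eq_type_lt Γ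
  have countable_Iio (α : Γ) : (Iio α).Countable :=
    Cardinal.le_aleph0_iff_set_countable.1
      (Cardinal.lt_aleph_one_iff.1 ((Cardinal.mk_Iio_lt α hord).trans_le hΓ))
  choose e e_injOn using fun β => countable_iff_exists_injOn.1 (countable_Iio β)
  refine ⟨fun k α => {β | α < β ∧ e β α ≤ k}, fun α k l hkl β hβ => ⟨hβ.1, hβ.2.trans hkl⟩,
    fun α => ?_, fun k β => ?_⟩
  · refine ((countable_Iio α).insert α).mono fun β hβ => ?_
    have hαβ : ¬ α < β := fun hlt => hβ (mem_iUnion_of_mem (e β α) ⟨hlt, le_rfl⟩)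
    exact (not_lt.1 hαβ).eq_or_lt
  · refine Finite.of_finite_image ((finite_Iic k).subset ?_) ((e_injOn β).mono fun α hα => hα.1)
    rintro _ ⟨α, hα, rfl⟩
    exact hα.2

end Combinatorics

namespace SetSeqContinuous

variable {Γ Y : Type*} [TopologicalSpace Y] {f : Set Γ → Y}

theorem exists_countable_forall_compl_mem (hf : SetSeqContinuous f) {U : Set Y}
    (hU : U ∈ 𝓝 (f univ)) :
    ∃ A : Set Γ, A.Countable ∧ ∀ D : Set Γ, D.Countable → Disjoint D A → f Dᶜ ∈ U := by
  by_contra! hcon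
  choose! D D_countable D_disjoint hD using hcon
  obtain ⟨A, A_mono, A_countable, hDA⟩ := exists_countable_monotone_chain D_countable
  have pairwise_disjoint : Pairwise (Function.onFun Disjoint fun j => D (A j)) :=
    (pairwise_disjoint_on _).2 fun i j hij =>
      ((D_disjoint _ (A_countable j)).mono_right ((hDA i).trans (A_mono hij))).symm
  have conv : SetConverges (fun j => (D (A j))ᶜ) univ :=
    compl_empty ▸ (setConverges_empty_of_pairwise_disjoint pairwise_disjoint).compl
  obtain ⟨j, hj⟩ := ((hf conv).eventually_mem hU).exists
  exact hD (A j) (A_countable j) hj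

theorem exists_countable_forall_compl_eq [FirstCountableTopology Y] [T1Space Y]
    (hf : SetSeqContinuous f) :
    ∃ A : Set Γ, A.Countable ∧
      ∀ D : Set Γ, D.Countable → Disjoint D A → f Dᶜ = f univ := by
  obtain ⟨U, hU⟩ := (𝓝 (f univ)).exists_antitone_basis
  choose A A_countable hA using fun n => hf.exists_countable_forall_compl_mem (hU.mem n)
  refine ⟨⋃ n, A n, countable_iUnion A_countable, fun D hD hDA => ?_⟩
  refine (specializes_iff_pure.2 fun V hV => ?_ : f Dᶜ ⤳ f univ).eq
  obtain ⟨n, hn⟩ := hU.mem_iff.1 hV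
  exact hn (hA n D hD (hDA.mono_right (subset_iUnion A n)))

theorem exists_countable_forall_superset_eq [FirstCountableTopology Y] [T2Space Y]
    (hΓ : #Γ ≤ ℵ₁) (hf : SetSeqContinuous f) :
    ∃ A : Set Γ, A.Countable ∧ ∀ B, A ⊆ B → f B = f univ := by
  by_cases hcount : Countable Γ
  · exact ⟨univ, countable_univ, fun B hB => by rw [univ_subset_iff.1 hB]⟩
  have : Uncountable Γ := not_countable_iff.1 hcount
  obtain ⟨A, A_countable, hA⟩ := hf.exists_countable_forall_compl_eq
  obtain ⟨W, W_mono, W_cocountable, W_finite⟩ := exists_ulam_matrix hΓ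
  refine ⟨A, A_countable, fun B hAB => ?_⟩
  by_contra hne
  obtain ⟨U, V, hU, hV, hUV⟩ := t2_separation_nhds hne
  have exists_mem (α : Γ) : ∃ k, f (B ∪ W k α) ∈ V := by
    have eq_univ : f (B ∪ ⋃ k, W k α) = f univ := by
      have := hA ((⋃ k, W k α)ᶜ \ B) ((W_cocountable α).mono sdiff_subset)
        (disjoint_sdiff_left.mono_right hAB)
      rwa [sdiff_eq, ← compl_union, compl_compl, union_comm] at this
    have conv := (setConverges_iUnion (W_mono α)).union_left B
    exact ((hf conv).eventually_mem (eq_univ ▸ hV)).exists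
  -- By pigeonhole one row `n` of the matrix serves infinitely many `α`; along these,
  -- point-finiteness of the row makes `f (B ∪ W n α)` tend to `f B`, although it stays in `V`.
  choose k hk using exists_mem
  obtain ⟨n, hn⟩ := exists_infinite_fiber_of_uncountable k
  let a := hn.natEmbedding
  have a_injective : Function.Injective fun j => (a j : Γ) := Subtype.val_injective.comp a.injective
  have row_conv : SetConverges (fun j => W n (a j)) ∅ :=
    setConverges_empty_of_finite fun γ => (W_finite n γ).preimage a_injective.injOn
  have conv : SetConverges (fun j => B ∪ W n (a j)) B := by
    simpa only [union_empty] using row_conv.union_left B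
  obtain ⟨j, hj⟩ := ((hf conv).eventually_mem hU).exists
  have hkj : k (a j) = n := (a j).2
  exact disjoint_left.1 hUV hj (by simpa only [hkj] using hk (a j))

end SetSeqContinuous

section DistanceInMeasure

variable {α G : Type*} [MeasurableSpace α] [NormedAddCommGroup G] {μ : Measure α} {f : α → G}

/-- The F-norm `∫ min(‖f‖, 1) dμ`. For a finite measure `μ` it metrizes convergence in measure;
the truncation makes it finite without any integrability assumption on `f`. -/
noncomputable def truncatedNorm (μ : Measure α) (f : α → G) : ℝ≥0∞ :=
  ∫⁻ x, min ‖f x‖ₑ 1 ∂μ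

theorem truncatedNorm_zero : truncatedNorm μ (0 : α → G) = 0 := by
  simp [truncatedNorm]

theorem truncatedNorm_congr {g : α → G} (h : f =ᵐ[μ] g) :
    truncatedNorm μ f = truncatedNorm μ g :=
  lintegral_congr_ae (h.fun_comp fun y => min ‖y‖ₑ 1)

theorem truncatedNorm_eq_zero_iff (hf : AEStronglyMeasurable f μ) :
    truncatedNorm μ f = 0 ↔ f =ᵐ[μ] 0 := by
  rw [truncatedNorm, lintegral_eq_zero_iff' (hf.enorm.min aemeasurable_const)]
  refine eventually_congr (.of_forall fun x => ?_)
  simp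

theorem tendsto_truncatedNorm [IsFiniteMeasure μ] {F : ℕ → α → G}
    (hF : ∀ n, AEStronglyMeasurable (F n) μ)
    (hlim : ∀ᵐ x ∂μ, Tendsto (fun n => F n x) atTop (𝓝 (f x))) :
    Tendsto (fun n => truncatedNorm μ (F n)) atTop (𝓝 (truncatedNorm μ f)) := by
  refine tendsto_lintegral_of_dominated_convergence' (fun _ => 1)
    (fun n => (hF n).enorm.min aemeasurable_const) (fun n => .of_forall fun x => min_le_right _ _)
    (by simp) ?_
  filter_upwards [hlim] with x hx
  exact hx.enorm.min tendsto_const_nhds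

end DistanceInMeasure

section WeakBaire

variable {E : Type*} [NormedAddCommGroup E] [NormedSpace ℝ E]

theorem measurable_of_BaW_le [m : MeasurableSpace E] (hm : BaW E ≤ m) (φ : E →L[ℝ] ℝ) :
    Measurable φ :=
  Measurable.of_comap_le ((le_iSup (fun φ : E →L[ℝ] ℝ => MeasurableSpace.comap φ _) φ).trans hm)

theorem ae_mem_iff_of_measurableSet_BaW [MeasurableSpace E] {μ : Measure E} {T : E → E}
    (hT : ∀ φ : E →L[ℝ] ℝ, ∀ᵐ x ∂μ, φ (T x) = φ x) {B : Set E} (hB : MeasurableSet[BaW E] B) :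
    ∀ᵐ x ∂μ, (T x ∈ B ↔ x ∈ B) := by
  let invariantSets : MeasurableSpace E :=
    { MeasurableSet' := fun B => ∀ᵐ x ∂μ, (T x ∈ B ↔ x ∈ B)
      measurableSet_empty := by simp
      measurableSet_compl := fun s hs => hs.mono fun x hx => not_congr hx
      measurableSet_iUnion := fun s hs => by
        filter_upwards [ae_all_iff.2 hs] with x hx
        simp only [mem_iUnion, hx] }
  have BaW_le : BaW E ≤ invariantSets := by
    refine iSup_le fun φ => ?_
    rintro _ ⟨s, -, rfl⟩
    exact (hT φ).mono fun x hx => by simp only [mem_preimage, hx]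
  exact BaW_le B hB

theorem measure_range_eq_univ_of_le_BaW [m : MeasurableSpace E] (hm : m ≤ BaW E) {μ : Measure E}
    {T : E → E} (hT : ∀ φ : E →L[ℝ] ℝ, ∀ᵐ x ∂μ, φ (T x) = φ x) : μ (range T) = μ univ := by
  have measurableSet_hull := measurableSet_toMeasurable μ (range T)
  rw [← measure_toMeasurable]
  refine measure_congr (eventuallyEq_univ.2 ?_)
  filter_upwards [ae_mem_iff_of_measurableSet_BaW hT (hm _ measurableSet_hull)] with x hx
  exact hx.1 (subset_toMeasurable μ _ (mem_range_self x))

end WeakBaire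

section ProjectionFamily

variable {Γ E : Type*} [NormedAddCommGroup E] [NormedSpace ℝ E]

/-- A family of commuting projections indexed by all subsets of `Γ` and depending on the subset in
a strongly sequentially continuous way, as the coordinate projections of a space with an
unconditional basis indexed by `Γ`. -/
structure IsSetProjectionFamily (P : Set Γ → E →L[ℝ] E) : Prop where
  univ_eq : P univ = .id ℝ E
  comp_eq : ∀ S T, P S ∘L P T = P (S ∩ T)
  seqContinuous : ∀ x, SetSeqContinuous fun S => P S x

namespace IsSetProjectionFamily

variable {P : Set Γ → E →L[ℝ] E}

theorem isIdempotentElem (hP : IsSetProjectionFamily P) (S : Set Γ) : IsIdempotentElem (P S) :=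
  (hP.comp_eq S S).trans (by rw [inter_self])

section Measure

variable [MeasurableSpace E] {μ : Measure E} [IsFiniteMeasure μ]

theorem exists_countable_forall_superset_ae_eq (hP : IsSetProjectionFamily P) (hΓ : #Γ ≤ ℵ₁)
    (hE : ∀ φ : E →L[ℝ] ℝ, Measurable φ) (φ : E →L[ℝ] ℝ) :
    ∃ A : Set Γ, A.Countable ∧ ∀ B, A ⊆ B → φ ∘L P B =ᵐ[μ] φ := by
  have seqContinuous : SetSeqContinuous fun S => truncatedNorm μ (φ ∘L P S - φ) :=
    fun S T hST => tendsto_truncatedNorm (fun n => (hE _).aestronglyMeasurable) <|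
      .of_forall fun x => ((φ.continuous.tendsto _).comp (hP.seqContinuous x hST)).sub_const (φ x)
  obtain ⟨A, A_countable, hA⟩ := seqContinuous.exists_countable_forall_superset_eq hΓ
  refine ⟨A, A_countable, fun B hAB => ?_⟩
  have norm_eq_zero : truncatedNorm μ (φ ∘L P B - φ) = 0 := by
    rw [hA B hAB, hP.univ_eq, ContinuousLinearMap.comp_id, sub_self]
    exact truncatedNorm_zero
  have := (truncatedNorm_eq_zero_iff (hE _).aestronglyMeasurable).1 norm_eq_zero
  exact this.mono fun x hx => sub_eq_zero.1 hx

theorem exists_countable_forall_truncatedNorm_le (hP : IsSetProjectionFamily P) (hΓ : #Γ ≤ ℵ₁)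
    (hE : ∀ φ : E →L[ℝ] ℝ, Measurable φ) {ε : ℝ≥0∞} (hε : 0 < ε) :
    ∃ A : Set Γ, A.Countable ∧
      ∀ φ : E →L[ℝ] ℝ, ‖φ‖ ≤ 1 → truncatedNorm μ (φ - φ ∘L P A) ≤ ε := by
  by_contra! hcon
  choose! φ norm_φ_le hφ using hcon
  choose B B_countable hB using hP.exists_countable_forall_superset_ae_eq (μ := μ) hΓ hE
  obtain ⟨A, A_mono, A_countable, hBA⟩ :=
    exists_countable_monotone_chain fun A (_ : A.Countable) => B_countable (φ A)
  have increments_tendsto (x : E) :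
      Tendsto (fun n => φ (A n) (P (A (n + 1)) x - P (A n) x)) atTop (𝓝 0) := by
    have conv := hP.seqContinuous x (setConverges_iUnion A_mono)
    have increment_norm := (((tendsto_add_atTop_iff_nat 1).2 conv).sub conv).norm
    rw [sub_self, norm_zero] at increment_norm
    exact squeeze_zero_norm
      (fun n => (φ (A n)).le_of_opNorm_le_of_le (norm_φ_le _ (A_countable n)) le_rfl |>.trans_eq
        (one_mul _)) increment_norm
  have norm_tendsto := tendsto_truncatedNorm (μ := μ)
    (F := fun n => φ (A n) ∘L (P (A (n + 1)) - P (A n))) (f := 0)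
    (fun n => (hE _).aestronglyMeasurable) (.of_forall increments_tendsto)
  rw [truncatedNorm_zero] at norm_tendsto
  obtain ⟨n, hn⟩ := (norm_tendsto.eventually_lt_const hε).exists
  refine lt_asymm hn ((hφ _ (A_countable n)).trans_eq (truncatedNorm_congr ?_))
  filter_upwards [hB (φ (A n)) (A (n + 1)) (hBA n)] with x hx
  have hx : φ (A n) (P (A (n + 1)) x) = φ (A n) x := hx
  simp [hx]

theorem exists_countable_forall_ae_eq (hP : IsSetProjectionFamily P) (hΓ : #Γ ≤ ℵ₁)
    (hE : ∀ φ : E →L[ℝ] ℝ, Measurable φ) :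
    ∃ A : Set Γ, A.Countable ∧ ∀ φ : E →L[ℝ] ℝ, ∀ᵐ x ∂μ, φ (P A x) = φ x := by
  choose A A_countable hA using fun n : ℕ =>
    hP.exists_countable_forall_truncatedNorm_le (μ := μ) hΓ hE (ε := (n : ℝ≥0∞)⁻¹) (by simp)
  refine ⟨⋃ n, A n, countable_iUnion A_countable, fun φ => ?_⟩
  set B := ⋃ n, A n
  -- `χ` vanishes on the range of each `P (A n)`, so `χ - χ ∘ P (A n) = χ`.
  let χ : E →L[ℝ] ℝ := φ - φ ∘L P B
  have χ_comp (n : ℕ) : χ ∘L P (A n) = 0 := by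
    rw [ContinuousLinearMap.sub_comp, ContinuousLinearMap.comp_assoc, hP.comp_eq,
      inter_eq_right.2 (subset_iUnion A n), sub_self]
  have norm_le_one : ‖‖χ‖⁻¹ • χ‖ ≤ 1 := by
    rw [norm_smul, norm_inv, norm_norm]
    exact inv_mul_le_one
  have truncatedNorm_eq_zero : truncatedNorm μ (‖χ‖⁻¹ • χ : E →L[ℝ] ℝ) = 0 := by
    refine le_antisymm (ge_of_tendsto' ENNReal.tendsto_inv_nat_nhds_zero fun n => ?_) zero_le
    simpa only [ContinuousLinearMap.smul_comp, χ_comp, smul_zero, sub_zero] using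
      hA n _ norm_le_one
  filter_upwards [(truncatedNorm_eq_zero_iff (hE _).aestronglyMeasurable).1 truncatedNorm_eq_zero]
    with x hx
  have χ_apply_eq_zero : χ x = 0 := by
    rcases smul_eq_zero.1 (show ‖χ‖⁻¹ • χ x = 0 from hx) with hχ | hχ
    · rw [norm_eq_zero.1 (inv_eq_zero.1 hχ), zero_apply]
    · exact hχ
  exact (sub_eq_zero.1 χ_apply_eq_zero).symm

end Measure

theorem exists_countable_measure_range_eq (hP : IsSetProjectionFamily P) (hΓ : #Γ ≤ ℵ₁)
    (μ : @Measure E (BaW E)) (hμ : @IsFiniteMeasure E (BaW E) μ) :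
    ∃ A : Set Γ, A.Countable ∧ μ (range (P A)) = μ univ := by
  let _ : MeasurableSpace E := BaW E
  obtain ⟨A, A_countable, hA⟩ :=
    hP.exists_countable_forall_ae_eq (μ := μ) hΓ (measurable_of_BaW_le le_rfl)
  exact ⟨A, A_countable, measure_range_eq_univ_of_le_BaW le_rfl hA⟩

end IsSetProjectionFamily

end ProjectionFamily

section CoordinateProjection

variable {Γ : Type*} {M : Γ → Type*} [∀ γ, TopologicalSpace (M γ)]

/-- The retraction of a product resetting to the base point `o` all coordinates where `s` is
`false`. Subsets are encoded as Boolean functions so that the dependence on `s` is continuous for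
the product topology. -/
def coordRetraction (o : ∀ γ, M γ) (s : Γ → Bool) : C(∀ γ, M γ, ∀ γ, M γ) where
  toFun t γ := bif s γ then t γ else o γ
  continuous_toFun := continuous_pi fun γ => by cases s γ <;> simp only [cond] <;> fun_prop

theorem coordRetraction_apply (o : ∀ γ, M γ) (s : Γ → Bool) (t : ∀ γ, M γ) (γ : Γ) :
    coordRetraction o s t γ = bif s γ then t γ else o γ :=
  rfl

theorem coordRetraction_boolIndicator_univ (o : ∀ γ, M γ) :
    coordRetraction o univ.boolIndicator = .id _ := by
  ext t γ
  simp [coordRetraction_apply, boolIndicator]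

theorem coordRetraction_boolIndicator_comp (o : ∀ γ, M γ) (S T : Set Γ) :
    (coordRetraction o T.boolIndicator).comp (coordRetraction o S.boolIndicator) =
      coordRetraction o (S ∩ T).boolIndicator := by
  ext t γ
  by_cases hS : γ ∈ S <;> by_cases hT : γ ∈ T <;>
    simp [coordRetraction_apply, boolIndicator, hS, hT]

theorem continuous_coordRetraction (o : ∀ γ, M γ) : Continuous (coordRetraction o) := by
  refine ContinuousMap.continuous_of_continuous_uncurry _ (continuous_pi fun γ => ?_)
  have eval_continuous : Continuous fun p : Bool × M γ => bif p.1 then p.2 else o γ :=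
    continuous_prod_of_discrete_left.2 fun b => by cases b <;> simp only [cond] <;> fun_prop
  exact eval_continuous.comp
    (((continuous_apply γ).comp continuous_fst).prodMk ((continuous_apply γ).comp continuous_snd) :
      Continuous fun p : (Γ → Bool) × (∀ γ, M γ) => (p.1 γ, p.2 γ))

variable {F : Type*} [NormedAddCommGroup F] [NormedSpace ℝ F] [∀ γ, CompactSpace (M γ)]

variable (F) in
/-- Composition with the retraction onto the coordinates in `S`, a projection of `C(∏ M γ, F)` onto
the functions that depend only on the coordinates in `S`. -/
noncomputable def coordProjection (o : ∀ γ, M γ) (S : Set Γ) :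
    C(∀ γ, M γ, F) →L[ℝ] C(∀ γ, M γ, F) :=
  ContinuousMap.compCLM ℝ F (coordRetraction o S.boolIndicator)

theorem isSetProjectionFamily_coordProjection (o : ∀ γ, M γ) :
    IsSetProjectionFamily (coordProjection F o) where
  univ_eq := by
    rw [coordProjection, coordRetraction_boolIndicator_univ]
    rfl
  comp_eq S T := by
    simp only [coordProjection, ← coordRetraction_boolIndicator_comp]
    rfl
  seqContinuous x _ _ hST :=
    (((ContinuousMap.continuous_postcomp x).comp (continuous_coordRetraction o)).tendsto _).comp
      hST.tendsto_boolIndicator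

theorem isSeparable_range_coordProjection [∀ γ, T2Space (M γ)]
    [∀ γ, SecondCountableTopology (M γ)] [SecondCountableTopology F] (o : ∀ γ, M γ) {A : Set Γ}
    (hA : A.Countable) : TopologicalSpace.IsSeparable (range (coordProjection F o A)) := by
  classical
  have : Countable A := hA
  let restriction : C(∀ γ, M γ, ∀ a : A, M a) := ⟨fun t a => t a, by fun_prop⟩
  let extension : C(∀ a : A, M a, ∀ γ, M γ) :=
    ⟨fun s γ => if hγ : γ ∈ A then s ⟨γ, hγ⟩ else o γ, continuous_pi fun γ => by
      by_cases hγ : γ ∈ A <;> simp only [hγ, dite_true, dite_false] <;> fun_prop⟩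
  have factor : coordRetraction o A.boolIndicator = extension.comp restriction := by
    ext t γ
    by_cases hγ : γ ∈ A <;> simp [coordRetraction_apply, boolIndicator, extension, restriction, hγ]
  refine (TopologicalSpace.isSeparable_range (f := fun y : C(∀ a : A, M a, F) => y.comp restriction)
    (ContinuousMap.continuous_precomp _)).mono ?_
  rintro _ ⟨x, rfl⟩
  exact ⟨x.comp extension, congrArg x.comp factor.symm⟩

end CoordinateProjection

theorem stmt6_general {Γ : Type*} (hΓ : #Γ ≤ ℵ₁) {M : Γ → Type*} [∀ γ, TopologicalSpace (M γ)]
    [∀ γ, CompactSpace (M γ)] [∀ γ, T2Space (M γ)] [∀ γ, SecondCountableTopology (M γ)]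
    [∀ γ, Nonempty (M γ)] {F : Type*} [NormedAddCommGroup F] [NormedSpace ℝ F]
    [SecondCountableTopology F] (μ : @Measure C(∀ γ, M γ, F) (BaW C(∀ γ, M γ, F)))
    (hμ : @IsFiniteMeasure _ (BaW C(∀ γ, M γ, F)) μ) :
    ∃ X₀ : Submodule ℝ C(∀ γ, M γ, F),
      IsClosed (X₀ : Set C(∀ γ, M γ, F)) ∧
      TopologicalSpace.IsSeparable (X₀ : Set C(∀ γ, M γ, F)) ∧
      μ (X₀ : Set C(∀ γ, M γ, F)) = μ univ := by
  let o : ∀ γ, M γ := fun γ => Classical.arbitrary (M γ)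
  have hP := isSetProjectionFamily_coordProjection (F := F) o
  obtain ⟨A, A_countable, hA⟩ := hP.exists_countable_measure_range_eq hΓ μ hμ
  exact ⟨(coordProjection F o A).range,
    ContinuousLinearMap.IsIdempotentElem.isClosed_range (hP.isIdempotentElem A),
    isSeparable_range_coordProjection o A_countable, hA⟩

/-- If `|Γ| = ℵ₁`, then `C(2^Γ)` is measure-compact in its weak topology: every
probability measure on `Ba(C(2^Γ)_w)` gives full outer measure to some separable closed
linear subspace. -/
theorem stmt6 (Γ : Type*) (h : Cardinal.mk Γ = Cardinal.aleph 1)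
    (μ : @MeasureTheory.Measure C(Γ → Bool, ℝ) (BaW C(Γ → Bool, ℝ)))
    (hμ : @MeasureTheory.IsProbabilityMeasure _ (BaW C(Γ → Bool, ℝ)) μ) :
    ∃ X₀ : Submodule ℝ C(Γ → Bool, ℝ),
      IsClosed (X₀ : Set C(Γ → Bool, ℝ)) ∧
      TopologicalSpace.IsSeparable (X₀ : Set C(Γ → Bool, ℝ)) ∧
      μ (X₀ : Set C(Γ → Bool, ℝ)) = 1 := by
  let _ : MeasurableSpace C(Γ → Bool, ℝ) := BaW C(Γ → Bool, ℝ)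
  simpa only [measure_univ] using stmt6_general h.le μ inferInstance
end
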